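/- Let r, q be nonzero complex numbers with q² ≠ 1 such that d := (r − r^{-1})/(q − q^{-1}) + 1 is nonzero. Then there exists a unique sequence of ℂ-linear functionals tr_n : D_n(r,q) → ℂ (n ≥ 1, with D_1(r,q) = ℂ) such that tr_1(1) = 1 and, for all n ≥ 2 and all a, b ∈ D_{n−1}(r,q): tr_n(ι(a)·ι(b)) = tr_{n−1}(ab), tr_n(ι(a)·T_{n−1}·ι(b)) = (r/d)·tr_{n−1}(ab), and tr_n(ι(a)·E_{n−1}·ι(b)) = (1/d)·tr_{n−1}(ab), where ι : D_{n−1}(r,q) → D_n(r,q) is the canonical homomorphism. Moreover each tr_n is a trace functional: tr_n(xy) = tr_n(yx) for all x, y ∈ D_n(r,q). -/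

import Mathlib

/-- Generators of the BMW algebra `D_n(r,q)`: the invertible generators `T_i`
(left summand) and their inverses `S_i = T_i⁻¹` (right summand), `1 ≤ i ≤ n-1`. -/
abbrev BMWGenerators (n : ℕ) := Fin (n - 1) ⊕ Fin (n - 1)

/-- The generator `T_i` in the free algebra. -/
def bmwT (n : ℕ) (i : Fin (n - 1)) : FreeAlgebra ℂ (BMWGenerators n) :=
  FreeAlgebra.ι ℂ (Sum.inl i)

/-- The generator `S_i = T_i⁻¹` in the free algebra. -/
def bmwS (n : ℕ) (i : Fin (n - 1)) : FreeAlgebra ℂ (BMWGenerators n) :=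
  FreeAlgebra.ι ℂ (Sum.inr i)

/-- The element `E_i = 1 - (T_i - S_i)/(q - q⁻¹)` in the free algebra. -/
noncomputable def bmwE (q : ℂ) (n : ℕ) (i : Fin (n - 1)) : FreeAlgebra ℂ (BMWGenerators n) :=
  1 - (q - q⁻¹)⁻¹ • (bmwT n i - bmwS n i)

/-- The defining relations of the BMW algebra `D_n(r,q)`. -/
inductive BMWRel (r q : ℂ) (n : ℕ) :
    FreeAlgebra ℂ (BMWGenerators n) → FreeAlgebra ℂ (BMWGenerators n) → Prop
  | inv_right (i : Fin (n - 1)) : BMWRel r q n (bmwT n i * bmwS n i) 1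
  | inv_left (i : Fin (n - 1)) : BMWRel r q n (bmwS n i * bmwT n i) 1
  | braid (i j : Fin (n - 1)) (h : (i : ℕ) + 1 = (j : ℕ)) :
      BMWRel r q n (bmwT n i * bmwT n j * bmwT n i) (bmwT n j * bmwT n i * bmwT n j)
  | comm (i j : Fin (n - 1)) (h : (i : ℕ) + 2 ≤ (j : ℕ)) :
      BMWRel r q n (bmwT n i * bmwT n j) (bmwT n j * bmwT n i)
  | eT (i : Fin (n - 1)) : BMWRel r q n (bmwE q n i * bmwT n i) (r⁻¹ • bmwE q n i)
  | eTe (i j : Fin (n - 1)) (h : (i : ℕ) + 1 = (j : ℕ)) :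
      BMWRel r q n (bmwE q n j * bmwT n i * bmwE q n j) (r • bmwE q n j)
  | eSe (i j : Fin (n - 1)) (h : (i : ℕ) + 1 = (j : ℕ)) :
      BMWRel r q n (bmwE q n j * bmwS n i * bmwE q n j) (r⁻¹ • bmwE q n j)

/-- The BMW algebra `D_n(r,q)`. -/
abbrev BMW (r q : ℂ) (n : ℕ) := RingQuot (BMWRel r q n)

/-- The generator `T_i` of `D_n(r,q)`. -/
noncomputable def BMW.T (r q : ℂ) (n : ℕ) (i : Fin (n - 1)) : BMW r q n :=
  RingQuot.mkAlgHom ℂ (BMWRel r q n) (bmwT n i)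

/-- The generator `S_i = T_i⁻¹` of `D_n(r,q)`. -/
noncomputable def BMW.S (r q : ℂ) (n : ℕ) (i : Fin (n - 1)) : BMW r q n :=
  RingQuot.mkAlgHom ℂ (BMWRel r q n) (bmwS n i)

/-- The element `E_i` of `D_n(r,q)`. -/
noncomputable def BMW.E (r q : ℂ) (n : ℕ) (i : Fin (n - 1)) : BMW r q n :=
  RingQuot.mkAlgHom ℂ (BMWRel r q n) (bmwE q n i)

/-- The defining conditions of the Markov trace on the tower of BMW algebras
`D_1 ⊂ D_2 ⊂ ⋯` (here `tr k` is the trace on `D_{k+1}(r,q)`, and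
`ι k : D_{k+1}(r,q) → D_{k+2}(r,q)` is the canonical inclusion):
`tr_1(1) = 1`, and for all `a, b ∈ D_{n-1}`, `tr_n(ι(a)ι(b)) = tr_{n-1}(ab)`,
`tr_n(ι(a)·T_{n-1}·ι(b)) = (r/d)·tr_{n-1}(ab)` and
`tr_n(ι(a)·E_{n-1}·ι(b)) = (1/d)·tr_{n-1}(ab)`,
where `d = (r - r⁻¹)/(q - q⁻¹) + 1`. -/
def IsMarkovTrace (r q : ℂ)
    (ι : ∀ k : ℕ, BMW r q (k + 1) →ₐ[ℂ] BMW r q (k + 2))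
    (tr : ∀ k : ℕ, BMW r q (k + 1) →ₗ[ℂ] ℂ) : Prop :=
  tr 0 1 = 1 ∧
    ∀ (k : ℕ) (a b : BMW r q (k + 1)),
      tr (k + 1) (ι k a * ι k b) = tr k (a * b) ∧
      tr (k + 1) (ι k a * BMW.T r q (k + 2) ⟨k, by omega⟩ * ι k b) =
        (r / ((r - r⁻¹) / (q - q⁻¹) + 1)) * tr k (a * b) ∧
      tr (k + 1) (ι k a * BMW.E r q (k + 2) ⟨k, by omega⟩ * ι k b) =
        (1 / ((r - r⁻¹) / (q - q⁻¹) + 1)) * tr k (a * b)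

/-!
The algebra `D_n` acts on the free module on the perfect matchings of `2 * n` points by crossings
of neighbouring points: the straightening rules that push a crossing through the arc ending at the
first point define operators satisfying the Kauffman skein relations, by induction on the number of
arcs. Acting on the first `n` points of `n` nested arcs and closing up by nested caps gives, after
division by `d ^ n`, the functional `tr_n`. It satisfies the Markov conditions by removing the
innermost arc, and it is a trace because a crossing next to the nested cups may be slid along them
to the other half of the points, where it commutes with the action of `D_n`.

Uniqueness holds because `D_n` is spanned by `ι(a) ι(b)`, `ι(a) T ι(b)` and `ι(a) E ι(b)`: that span
is closed under multiplication by `T`, since for adjacent crossings `t`, `u` with skein algebras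
`P_t = ⟨1, t, E_t⟩`, `P_u` one has `P_u P_t P_u ⊆ B P_u B`, where `B` contains `P_t`.
-/

/-! ### The matching representation -/

section Skein

/-- The parameters of a Kauffman skein theory over `R`: a twist multiplies by `s = r⁻¹`, a positive
minus a negative crossing is `z` times the difference of the two smoothings, and a closed loop
is `d`. -/
structure KauffmanParameters (R : Type*) [CommRing R] where
  r : R
  s : R
  z : R
  d : R
  r_mul_s : r * s = 1
  z_mul_d : z * d = r - s + z

/-- Perfect matchings of `2 * k` points on a line, recorded by the position of the partner of the
first point among the other points, followed by the matching of the remaining points. -/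
def Matching : ℕ → Type
  | 0 => Unit
  | k + 1 => Fin (2 * k + 1) × Matching k

variable {R : Type*} [CommRing R]

/-- The free module on the matchings of `2 * k` points, standing for the skein module of tangles
with `2 * k` endpoints on one line. The parameters enter only through the operators on it. -/
def MatchingModule (_p : KauffmanParameters R) (k : ℕ) : Type _ := Matching k → R

namespace MatchingModule

section

variable {p : KauffmanParameters R} {k l : ℕ} {N : Type*} [AddCommGroup N] [Module R N]

instance : AddCommGroup (MatchingModule p k) := inferInstanceAs (AddCommGroup (Matching k → R))

instance : Module R (MatchingModule p k) := inferInstanceAs (Module R (Matching k → R))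

/-- Sorting matchings by the partner of the first point. -/
def splitFirst : MatchingModule p (k + 1) ≃ₗ[R] (Fin (2 * k + 1) → MatchingModule p k) :=
  LinearEquiv.curry R R (Fin (2 * k + 1)) (Matching k)

/-- Insert an arc joining a new first point to a new point at position `x` among the others
(the zero map if `x > 2 * k`). -/
def arc (x : ℕ) : MatchingModule p k →ₗ[R] MatchingModule p (k + 1) :=
  if h : x < 2 * k + 1 then
    splitFirst.symm.toLinearMap ∘ₗ LinearMap.single R (fun _ => MatchingModule p k) ⟨x, h⟩
  else 0

/-- The linear map whose composition with `arc x` is `F x` for all `x ≤ 2 * k`. -/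
def desc (F : ℕ → MatchingModule p k →ₗ[R] N) : MatchingModule p (k + 1) →ₗ[R] N :=
  LinearMap.lsum R (fun _ => MatchingModule p k) ℕ (fun x : Fin (2 * k + 1) => F x) ∘ₗ
    splitFirst.toLinearMap

theorem desc_arc (F : ℕ → MatchingModule p k →ₗ[R] N) {x : ℕ} (hx : x ≤ 2 * k)
    (v : MatchingModule p k) : desc F (arc x v) = F x v := by
  have hsplit : splitFirst (arc x v) =
      Pi.single (⟨x, Nat.lt_succ_of_le hx⟩ : Fin (2 * k + 1)) v := by
    simp [arc, Nat.lt_succ_of_le hx]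
  exact (congrArg (LinearMap.lsum R _ ℕ _) hsplit).trans (LinearMap.lsum_piSingle ..)

theorem ext_arc (f g : MatchingModule p (k + 1) →ₗ[R] N)
    (h : ∀ x ≤ 2 * k, ∀ v, f (arc x v) = g (arc x v)) (w : MatchingModule p (k + 1)) :
    f w = g w := by
  refine DFunLike.congr_fun ((LinearEquiv.eq_comp_toLinearMap_iff (e₁₂ := splitFirst.symm) f g).1
    (LinearMap.pi_ext fun x v => ?_)) w
  simpa [arc, Nat.le_of_lt_succ x.2] using h x (Nat.le_of_lt_succ x.2) v

/-- Insert a small arc joining the new neighbouring points `i` and `i + 1`. -/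
def cup : {k : ℕ} → ℕ → MatchingModule p k →ₗ[R] MatchingModule p (k + 1)
  | _, 0 => arc 0
  | 0, _ + 1 => 0
  | k + 1, j + 1 => desc fun x =>
      if x < j then arc x ∘ₗ cup (k := k) (j - 1) else arc (x + 2) ∘ₗ cup (k := k) j

/-- The composite `A 0 ∘ A 1 ∘ ⋯ ∘ A (j - 1)`. -/
def ascending (A : ℕ → Module.End R N) : ℕ → Module.End R N
  | 0 => LinearMap.id
  | j + 1 => ascending A j ∘ₗ A j

/-- The composite `A (j - 1) ∘ ⋯ ∘ A 1 ∘ A 0`. -/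
def descending (A : ℕ → Module.End R N) : ℕ → Module.End R N
  | 0 => LinearMap.id
  | j + 1 => A j ∘ₗ descending A j

variable (p) in
/-- The operators of positive crossings `T i`, negative crossings `S i` and caps `cap i` on
neighbouring points `i` and `i + 1`, bundled because the three are defined by one recursion
on `k`. -/
structure Operators (k : ℕ) where
  T : ℕ → Module.End R (MatchingModule p k)
  S : ℕ → Module.End R (MatchingModule p k)
  cap : ℕ → MatchingModule p (k + 1) →ₗ[R] MatchingModule p k

namespace Operators

/-- Closing the first two points: an arc to `x + 1` becomes a strand pulled back over `x` others,
which gives the crossings `T`. -/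
def capZero (T : ℕ → Module.End R (MatchingModule p k)) :
    MatchingModule p (k + 1) →ₗ[R] MatchingModule p k :=
  desc fun
    | 0 => p.d • LinearMap.id
    | x + 1 => p.r • descending T x

/-- The caps on `2 * (k + 2)` points. -/
def capStep (T S : ℕ → Module.End R (MatchingModule p (k + 1)))
    (c : ℕ → MatchingModule p (k + 1) →ₗ[R] MatchingModule p k) :
    ℕ → MatchingModule p (k + 2) →ₗ[R] MatchingModule p (k + 1)
  | 0 => capZero T
  | j + 1 => desc fun x =>
      if x < j then arc x ∘ₗ c (j - 1) else if x = j then ascending S j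
      else if x = j + 1 then p.s • ascending S j else arc (x - 2) ∘ₗ c j

/-- The crossing of the points `j + 1` and `j + 2` among `2 * (k + 1)`; the arc of the first point
ends at one of them iff `x = j` or `x = j + 1`. -/
def crossingSucc (o : Operators p k) (j : ℕ) : Module.End R (MatchingModule p (k + 1)) :=
  desc fun x =>
    if x < j then arc x ∘ₗ o.T (j - 1) else if x = j then arc (j + 1)
    else if x = j + 1 then
      arc j + p.z • arc (j + 1) - (p.z * p.s) • cup (j + 1) ∘ₗ ascending o.S j
    else arc x ∘ₗ o.T j

/-- The inverse of a crossing `t` of the points `i` and `i + 1`, by the skein relation. -/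
def skeinInverse (o : Operators p k) (i : ℕ) (t : Module.End R (MatchingModule p (k + 1))) :
    Module.End R (MatchingModule p (k + 1)) :=
  t - p.z • (LinearMap.id - cup i ∘ₗ o.cap i)

/-- The crossings on `2 * (k + 1)` points. -/
def crossing (o : Operators p k) : ℕ → Module.End R (MatchingModule p (k + 1))
  | 0 => desc fun
    | 0 => p.s • arc 0
    | x + 1 => ascending (fun j => o.skeinInverse (j + 1) (o.crossingSucc j)) x ∘ₗ cup (x + 1)
  | j + 1 => o.crossingSucc j

end Operators

open Operators in
variable (p) in
/-- The operators on the matchings of `2 * k` points. -/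
def operators : (k : ℕ) → Operators p k
  | 0 => ⟨0, 0, fun
      | 0 => capZero 0
      | _ + 1 => 0⟩
  | k + 1 =>
    let o := operators k
    let S := fun i => o.skeinInverse i (o.crossing i)
    ⟨o.crossing, S, capStep o.crossing S o.cap⟩

/-- The positive crossing of the points `i` and `i + 1`. -/
def T (i : ℕ) : Module.End R (MatchingModule p k) := (operators p k).T i

/-- The negative crossing of the points `i` and `i + 1`. -/
def S (i : ℕ) : Module.End R (MatchingModule p k) := (operators p k).S i

/-- Join the points `i` and `i + 1` by a cap. -/
def cap (i : ℕ) : MatchingModule p (k + 1) →ₗ[R] MatchingModule p k := (operators p k).cap i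

/-- The composite `S a ∘ S (a + 1) ∘ ⋯ ∘ S (a + j - 1)`. -/
def chainS (a : ℕ) (j : ℕ) : Module.End R (MatchingModule p k) :=
  ascending (fun i => S (i + a)) j

/-- The composite `T (a + j - 1) ∘ ⋯ ∘ T (a + 1) ∘ T a`. -/
def chainT (a : ℕ) (j : ℕ) : Module.End R (MatchingModule p k) :=
  descending (fun i => T (i + a)) j

section Components

variable {i j x : ℕ} (v : MatchingModule p k)

@[simp] theorem chainS_zero (a : ℕ) : chainS a 0 v = v := rfl

theorem chainS_succ (a : ℕ) : chainS a (j + 1) v = chainS a j (S (j + a) v) := rfl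

@[simp] theorem chainT_zero (a : ℕ) : chainT a 0 v = v := rfl

theorem chainT_succ (a : ℕ) : chainT a (j + 1) v = T (j + a) (chainT a j v) := rfl

theorem chainS_zero_succ : chainS 0 (j + 1) v = chainS 0 j (S j v) := rfl

theorem chainT_zero_succ : chainT 0 (j + 1) v = T j (chainT 0 j v) := rfl

theorem S_apply (i : ℕ) (v : MatchingModule p (k + 1)) :
    S i v = T i v - p.z • (v - cup i (cap i v)) := rfl

@[simp] theorem cup_zero : cup 0 v = arc 0 v := by
  cases k <;> simp only [cup]

@[simp] theorem cup_arc_of_lt (h : x ≤ j) (hx : x ≤ 2 * k) :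
    cup (j + 2) (arc x v) = arc x (cup j v) := by
  rw [cup, desc_arc _ hx, if_pos (by omega)]
  rfl

@[simp] theorem cup_arc_of_le (h : j ≤ x) (hx : x ≤ 2 * k) :
    cup (j + 1) (arc x v) = arc (x + 2) (cup j v) := by
  rw [cup, desc_arc _ hx, if_neg (by omega)]
  rfl

@[simp] theorem cap_zero_arc_zero : cap 0 (arc 0 v) = p.d • v := by
  cases k <;> exact desc_arc _ (Nat.zero_le _) v

@[simp] theorem cap_zero_arc_succ (hx : x + 1 ≤ 2 * k) :
    cap 0 (arc (x + 1) v) = p.r • chainT 0 x v := by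
  cases k with
  | zero => omega
  | succ k => exact desc_arc _ hx v

@[simp] theorem cap_arc_of_lt (h : x ≤ j) (hx : x ≤ 2 * k + 2) (v : MatchingModule p (k + 1)) :
    cap (j + 2) (arc x v) = arc x (cap j v) := by
  refine (desc_arc _ (by omega) v).trans ?_
  rw [if_pos (by omega)]
  rfl

@[simp] theorem cap_arc_self (hj : j ≤ 2 * k + 2) (v : MatchingModule p (k + 1)) :
    cap (j + 1) (arc j v) = chainS 0 j v := by
  refine (desc_arc _ (by omega) v).trans ?_
  rw [if_neg (by omega), if_pos rfl]
  rfl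

@[simp] theorem cap_arc_succ (hj : j ≤ 2 * k + 1) (v : MatchingModule p (k + 1)) :
    cap (j + 1) (arc (j + 1) v) = p.s • chainS 0 j v := by
  refine (desc_arc _ (by omega) v).trans ?_
  rw [if_neg (by omega), if_neg (by omega), if_pos rfl]
  rfl

@[simp] theorem cap_arc_of_gt (h : j ≤ x) (hx : x ≤ 2 * k) (v : MatchingModule p (k + 1)) :
    cap (j + 1) (arc (x + 2) v) = arc x (cap j v) := by
  refine (desc_arc _ (by omega) v).trans ?_
  rw [if_neg (by omega), if_neg (by omega), if_neg (by omega)]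
  rfl

@[simp] theorem T_zero_arc_zero : T 0 (arc 0 v) = p.s • arc 0 v :=
  desc_arc _ (Nat.zero_le _) v

@[simp] theorem T_zero_arc_succ (hx : x + 1 ≤ 2 * k) :
    T 0 (arc (x + 1) v) = chainS 1 x (cup (x + 1) v) :=
  desc_arc _ hx v

@[simp] theorem T_arc_of_lt (h : x ≤ j) (hx : x ≤ 2 * k) :
    T (j + 2) (arc x v) = arc x (T j v) := by
  refine (desc_arc _ hx v).trans ?_
  rw [if_pos (by omega)]
  rfl

@[simp] theorem T_arc_self (hj : j ≤ 2 * k) : T (j + 1) (arc j v) = arc (j + 1) v := by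
  refine (desc_arc _ hj v).trans ?_
  rw [if_neg (by omega), if_pos rfl]

@[simp] theorem T_arc_succ (hj : j + 1 ≤ 2 * k) :
    T (j + 1) (arc (j + 1) v) =
      arc j v + p.z • arc (j + 1) v - (p.z * p.s) • cup (j + 1) (chainS 0 j v) := by
  refine (desc_arc _ hj v).trans ?_
  rw [if_neg (by omega), if_neg (by omega), if_pos rfl]
  rfl

@[simp] theorem T_arc_of_gt (h : j ≤ x) (hx : x + 2 ≤ 2 * k) :
    T (j + 1) (arc (x + 2) v) = arc (x + 2) (T j v) := by
  refine (desc_arc _ hx v).trans ?_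
  rw [if_neg (by omega), if_neg (by omega), if_neg (by omega)]
  rfl

@[simp] theorem S_arc_of_lt (h : x ≤ j) (hx : x ≤ 2 * k) (v : MatchingModule p (k + 1)) :
    S (j + 2) (arc x v) = arc x (S j v) := by
  simp (disch := omega) [S_apply]

@[simp] theorem S_arc_self (hj : j ≤ 2 * k + 2) (v : MatchingModule p (k + 1)) :
    S (j + 1) (arc j v) =
      arc (j + 1) v - p.z • (arc j v - cup (j + 1) (chainS 0 j v)) := by
  simp (disch := omega) [S_apply]

@[simp] theorem S_arc_succ (hj : j ≤ 2 * k + 1) (v : MatchingModule p (k + 1)) :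
    S (j + 1) (arc (j + 1) v) = arc j v := by
  simp (disch := omega) only [S_apply, T_arc_succ, cap_arc_succ, map_smul]
  module

@[simp] theorem S_arc_of_gt (h : j ≤ x) (hx : x ≤ 2 * k) (v : MatchingModule p (k + 1)) :
    S (j + 1) (arc (x + 2) v) = arc (x + 2) (S j v) := by
  simp (disch := omega) [S_apply]

end Components

end

section

variable {p : KauffmanParameters R} {k l : ℕ} {N : Type*} [AddCommGroup N] [Module R N]

variable (p) in
/-- The defining relations of the braid group on `2 * k` strands, for the crossings `T i` with
`a ≤ i`. -/
structure BraidRelations (a k : ℕ) : Prop where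
  T_S : ∀ {i}, a ≤ i → i + 1 < 2 * k → ∀ v : MatchingModule p k, T i (S i v) = v
  S_T : ∀ {i}, a ≤ i → i + 1 < 2 * k → ∀ v : MatchingModule p k, S i (T i v) = v
  T_comm : ∀ {i j}, a ≤ i → i + 2 ≤ j → j + 1 < 2 * k →
    ∀ v : MatchingModule p k, T i (T j v) = T j (T i v)
  T_braid : ∀ {i}, a ≤ i → i + 2 < 2 * k → ∀ v : MatchingModule p k,
    T i (T (i + 1) (T i v)) = T (i + 1) (T i (T (i + 1) v))

variable (p) in
/-- The relations between crossings, cups and caps of index at least `a` joining `2 * k` to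
`2 * (k + 1)` points, apart from those that involve only cups and caps far from each other. -/
structure TangleRelations (a k : ℕ) : Prop extends BraidRelations p a (k + 1) where
  lower : BraidRelations p a k
  cap_cup : ∀ {i}, a ≤ i → i ≤ 2 * k → ∀ v : MatchingModule p k, cap i (cup i v) = p.d • v
  cap_cup_succ : ∀ {i}, a ≤ i → i + 1 ≤ 2 * k →
    ∀ v : MatchingModule p k, cap i (cup (i + 1) v) = v
  cap_succ_cup : ∀ {i}, a ≤ i → i + 1 ≤ 2 * k →
    ∀ v : MatchingModule p k, cap (i + 1) (cup i v) = v
  T_cup : ∀ {i}, a ≤ i → i ≤ 2 * k → ∀ v : MatchingModule p k, T i (cup i v) = p.s • cup i v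
  cap_T : ∀ {i}, a ≤ i → i ≤ 2 * k →
    ∀ v : MatchingModule p (k + 1), cap i (T i v) = p.s • cap i v
  T_cup_of_lt : ∀ {i j}, a ≤ i → i + 2 ≤ j → j ≤ 2 * k →
    ∀ v : MatchingModule p k, T i (cup j v) = cup j (T i v)
  T_cup_of_gt : ∀ {i j}, a ≤ j → j ≤ i → i + 1 < 2 * k →
    ∀ v : MatchingModule p k, T (i + 2) (cup j v) = cup j (T i v)
  cap_T_of_lt : ∀ {i j}, a ≤ i → i + 2 ≤ j → j ≤ 2 * k →
    ∀ v : MatchingModule p (k + 1), cap j (T i v) = T i (cap j v)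
  cap_T_of_gt : ∀ {i j}, a ≤ j → j ≤ i → i + 1 < 2 * k →
    ∀ v : MatchingModule p (k + 1), cap j (T (i + 2) v) = T i (cap j v)
  T_T_succ_cup : ∀ {i}, a ≤ i → i + 1 ≤ 2 * k →
    ∀ v : MatchingModule p k, T i (T (i + 1) (cup i v)) = cup (i + 1) v
  T_succ_T_cup : ∀ {i}, a ≤ i → i + 1 ≤ 2 * k →
    ∀ v : MatchingModule p k, T (i + 1) (T i (cup (i + 1) v)) = cup i v
  cap_T_T_succ : ∀ {i}, a ≤ i → i + 1 ≤ 2 * k →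
    ∀ v : MatchingModule p (k + 1), cap (i + 1) (T i (T (i + 1) v)) = cap i v
  cap_T_succ_T : ∀ {i}, a ≤ i → i + 1 ≤ 2 * k →
    ∀ v : MatchingModule p (k + 1), cap i (T (i + 1) (T i v)) = cap (i + 1) v

variable (p) in
/-- Cups and caps far from each other commute, up to the shift of indices. -/
structure CupCapRelations (k : ℕ) : Prop where
  cup_cup : ∀ {i j}, i ≤ j → j ≤ 2 * k →
    ∀ v : MatchingModule p k, cup (j + 2) (cup i v) = cup i (cup j v)
  cap_cap : ∀ {i j}, i ≤ j → j ≤ 2 * k →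
    ∀ v : MatchingModule p (k + 2), cap i (cap (j + 2) v) = cap j (cap i v)
  cap_cup_of_lt : ∀ {i j}, i ≤ j → j ≤ 2 * k →
    ∀ v : MatchingModule p (k + 1), cap (j + 2) (cup i v) = cup i (cap j v)
  cap_cup_of_gt : ∀ {i j}, i ≤ j → j ≤ 2 * k →
    ∀ v : MatchingModule p (k + 1), cap i (cup (j + 2) v) = cup j (cap i v)

theorem r_smul_s_smul (p : KauffmanParameters R) (v : N) : p.r • p.s • v = v := by
  rw [smul_smul, p.r_mul_s, one_smul]

theorem s_smul_r_smul (p : KauffmanParameters R) (v : N) : p.s • p.r • v = v := by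
  rw [smul_comm, r_smul_s_smul]

theorem map_chainS (f : MatchingModule p k →ₗ[R] MatchingModule p l) {a b j : ℕ}
    (h : ∀ i < j, ∀ v, f (S (i + a) v) = S (i + b) (f v)) (v : MatchingModule p k) :
    f (chainS a j v) = chainS b j (f v) := by
  induction j generalizing v with
  | zero => rfl
  | succ j ih => rw [chainS_succ, chainS_succ, ih fun i hi => h i (by omega), h j (by omega)]

theorem map_chainT (f : MatchingModule p k →ₗ[R] MatchingModule p l) {a b j : ℕ}
    (h : ∀ i < j, ∀ v, f (T (i + a) v) = T (i + b) (f v)) (v : MatchingModule p k) :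
    f (chainT a j v) = chainT b j (f v) := by
  induction j with
  | zero => rfl
  | succ j ih => rw [chainT_succ, chainT_succ, h j (by omega), ih fun i hi => h i (by omega)]

theorem chainS_succ_eq_S (a j : ℕ) (v : MatchingModule p k) :
    chainS a (j + 1) v = S a (chainS (a + 1) j v) := by
  induction j generalizing v with
  | zero => rw [chainS_succ, chainS_zero, chainS_zero, Nat.zero_add]
  | succ j ih => rw [chainS_succ, ih, chainS_succ, Nat.add_right_comm j 1 a, Nat.add_assoc]

theorem chainT_succ_eq_chainT (a j : ℕ) (v : MatchingModule p k) :
    chainT a (j + 1) v = chainT (a + 1) j (T a v) := by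
  induction j with
  | zero => rw [chainT_succ, chainT_zero, chainT_zero, Nat.zero_add]
  | succ j ih => rw [chainT_succ, ih, chainT_succ, Nat.add_right_comm j 1 a, Nat.add_assoc]

variable {a b i j : ℕ}

theorem T_sq_of_T_S {v : MatchingModule p (k + 1)} (hTS : T i (S i v) = v)
    (hT : T i (cup i (cap i v)) = p.s • cup i (cap i v)) :
    T i (T i v) = v + p.z • T i v - (p.z * p.s) • cup i (cap i v) := by
  rw [S_apply, map_sub, map_smul, map_sub, hT] at hTS
  linear_combination (norm := module) hTS

theorem S_T_of_T_S (hTS : ∀ v : MatchingModule p (k + 1), T i (S i v) = v)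
    (hT : ∀ v : MatchingModule p k, T i (cup i v) = p.s • cup i v)
    (hcap : ∀ v : MatchingModule p (k + 1), cap i (T i v) = p.s • cap i v)
    (v : MatchingModule p (k + 1)) : S i (T i v) = v := by
  conv_rhs => rw [← hTS v]
  simp only [S_apply, map_sub, map_smul, hcap, hT]

namespace BraidRelations

theorem mono (H : BraidRelations p a k) (hab : a ≤ b) : BraidRelations p b k where
  T_S h := H.T_S (hab.trans h)
  S_T h := H.S_T (hab.trans h)
  T_comm h := H.T_comm (hab.trans h)
  T_braid h := H.T_braid (hab.trans h)

variable (H : BraidRelations p a k)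
include H

theorem S_T_comm (hi : a ≤ i) (hij : i + 2 ≤ j) (hj : j + 1 < 2 * k)
    (v : MatchingModule p k) : S i (T j v) = T j (S i v) := by
  conv_lhs => rw [← H.T_S (i := i) hi (by omega) v]
  rw [← H.T_comm hi hij hj, H.S_T hi (by omega)]

theorem T_S_comm (hi : a ≤ i) (hij : i + 2 ≤ j) (hj : j + 1 < 2 * k)
    (v : MatchingModule p k) : T i (S j v) = S j (T i v) := by
  conv_rhs => rw [← H.T_S (i := j) (by omega) hj v]
  rw [H.T_comm hi hij hj, H.S_T (by omega) hj]

theorem S_S_succ_T (hi : a ≤ i) (hik : i + 2 < 2 * k) (v : MatchingModule p k) :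
    S i (S (i + 1) (T i v)) = T (i + 1) (S i (S (i + 1) v)) := by
  have hbraid := H.T_braid hi hik (S i (S (i + 1) v))
  rw [H.T_S hi (by omega), H.T_S (i := i + 1) (by omega) hik] at hbraid
  rw [hbraid, H.S_T (i := i + 1) (by omega) hik, H.S_T hi (by omega)]

theorem chainS_T_of_gt (hij : j + a + 1 ≤ i) (hi : i + 1 < 2 * k) (v : MatchingModule p k) :
    chainS a j (T i v) = T i (chainS a j v) :=
  (map_chainS (T i) (fun _ _ _ => (H.S_T_comm (by omega) (by omega) hi _).symm) v).symm

theorem chainS_T_of_lt (hi : a ≤ i) (hij : i + 2 ≤ j + a) (hj : j + a < 2 * k)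
    (v : MatchingModule p k) : chainS a j (T i v) = T (i + 1) (chainS a j v) := by
  obtain ⟨i, rfl⟩ := Nat.exists_eq_add_of_le' hi
  obtain ⟨n, rfl⟩ := Nat.exists_eq_add_of_le (show i + 2 ≤ j by omega)
  clear hij
  induction n generalizing v with
  | zero =>
    simp only [Nat.add_zero, chainS_succ, Nat.add_right_comm i 1 a]
    rw [H.S_S_succ_T hi (by omega), H.chainS_T_of_gt (by omega) (by omega)]
  | succ n ih =>
    rw [← Nat.add_assoc, chainS_succ, chainS_succ, ← H.T_S_comm hi (by omega) (by omega),
      ih _ (by omega)]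

theorem chainT_T_of_gt (hij : j + a + 1 ≤ i) (hi : i + 1 < 2 * k) (v : MatchingModule p k) :
    chainT a j (T i v) = T i (chainT a j v) :=
  (map_chainT (T i) (fun _ _ _ => (H.T_comm (by omega) (by omega) hi _).symm) v).symm

theorem chainT_S_of_gt (hij : j + a + 1 ≤ i) (hi : i + 1 < 2 * k) (v : MatchingModule p k) :
    chainT a j (S i v) = S i (chainT a j v) :=
  (map_chainT (S i) (fun _ _ _ => (H.T_S_comm (by omega) (by omega) hi _).symm) v).symm

theorem chainT_T_of_lt (hi : a ≤ i) (hij : i + 2 ≤ j + a) (hj : j + a < 2 * k)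
    (v : MatchingModule p k) : chainT a j (T (i + 1) v) = T i (chainT a j v) := by
  obtain ⟨i, rfl⟩ := Nat.exists_eq_add_of_le' hi
  obtain ⟨n, rfl⟩ := Nat.exists_eq_add_of_le (show i + 2 ≤ j by omega)
  clear hij
  induction n with
  | zero =>
    simp only [Nat.add_zero, chainT_succ, Nat.add_right_comm i 1 a]
    rw [H.chainT_T_of_gt (by omega) (by omega), H.T_braid hi (by omega)]
  | succ n ih =>
    rw [← Nat.add_assoc, chainT_succ, chainT_succ, ih (by omega),
      ← H.T_comm hi (by omega) (by omega)]

theorem T_chainS_succ (ha : a + 1 < 2 * k) (v : MatchingModule p k) :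
    T a (chainS a (j + 1) v) = chainS (a + 1) j v := by
  rw [chainS_succ_eq_S, H.T_S le_rfl ha]

end BraidRelations

namespace TangleRelations

variable (H : TangleRelations p a k)
include H

theorem S_cup (hi : a ≤ i) (hik : i ≤ 2 * k) (v : MatchingModule p k) :
    S i (cup i v) = p.r • cup i v := by
  conv_rhs => rw [← H.S_T (i := i) hi (by omega) (cup i v), H.T_cup hi hik, map_smul,
    r_smul_s_smul]

theorem cap_S (hi : a ≤ i) (hik : i ≤ 2 * k) (v : MatchingModule p (k + 1)) :
    cap i (S i v) = p.r • cap i v := by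
  conv_rhs => rw [← H.T_S (i := i) hi (by omega) v, H.cap_T hi hik, r_smul_s_smul]

theorem S_cup_of_lt (hi : a ≤ i) (hij : i + 2 ≤ j) (hj : j ≤ 2 * k) (v : MatchingModule p k) :
    S i (cup j v) = cup j (S i v) := by
  conv_lhs => rw [← H.lower.T_S (i := i) hi (by omega) v]
  rw [← H.T_cup_of_lt hi hij hj, H.S_T hi (by omega)]

theorem S_cup_of_gt (hj : a ≤ j) (hij : j ≤ i) (hi : i + 1 < 2 * k) (v : MatchingModule p k) :
    S (i + 2) (cup j v) = cup j (S i v) := by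
  conv_lhs => rw [← H.lower.T_S (i := i) (by omega) (by omega) v]
  rw [← H.T_cup_of_gt hj hij hi, H.S_T (by omega) (by omega)]

theorem cap_S_of_lt (hi : a ≤ i) (hij : i + 2 ≤ j) (hj : j ≤ 2 * k)
    (v : MatchingModule p (k + 1)) : cap j (S i v) = S i (cap j v) := by
  conv_rhs => rw [← H.T_S (i := i) hi (by omega) v]
  rw [H.cap_T_of_lt hi hij hj, H.lower.S_T hi (by omega)]

theorem cap_S_of_gt (hj : a ≤ j) (hij : j ≤ i) (hi : i + 1 < 2 * k)
    (v : MatchingModule p (k + 1)) : cap j (S (i + 2) v) = S i (cap j v) := by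
  conv_rhs => rw [← H.T_S (i := i + 2) (by omega) (by omega) v]
  rw [H.cap_T_of_gt hj hij hi, H.lower.S_T (by omega) (by omega)]

theorem S_cup_succ (hi : a ≤ i) (hik : i + 1 ≤ 2 * k) (v : MatchingModule p k) :
    S i (cup (i + 1) v) = T (i + 1) (cup i v) := by
  rw [← H.T_T_succ_cup hi hik, H.S_T hi (by omega)]

theorem S_succ_cup (hi : a ≤ i) (hik : i + 1 ≤ 2 * k) (v : MatchingModule p k) :
    S (i + 1) (cup i v) = T i (cup (i + 1) v) := by
  rw [← H.T_succ_T_cup hi hik, H.S_T (by omega) (by omega)]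

theorem S_S_succ_cup (hi : a ≤ i) (hik : i + 1 ≤ 2 * k) (v : MatchingModule p k) :
    S i (S (i + 1) (cup i v)) = cup (i + 1) v := by
  rw [H.S_succ_cup hi hik, H.S_T hi (by omega)]

theorem cap_S_succ (hi : a ≤ i) (hik : i + 1 ≤ 2 * k) (v : MatchingModule p (k + 1)) :
    cap i (S (i + 1) v) = cap (i + 1) (T i v) := by
  rw [← H.cap_T_T_succ hi hik, H.T_S (by omega) (by omega)]

theorem cap_succ_S (hi : a ≤ i) (hik : i + 1 ≤ 2 * k) (v : MatchingModule p (k + 1)) :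
    cap (i + 1) (S i v) = cap i (T (i + 1) v) := by
  rw [← H.cap_T_succ_T hi hik, H.T_S hi (by omega)]

theorem cap_S_S_succ (hi : a ≤ i) (hik : i + 1 ≤ 2 * k) (v : MatchingModule p (k + 1)) :
    cap (i + 1) (S i (S (i + 1) v)) = cap i v := by
  rw [H.cap_succ_S hi hik, H.T_S (by omega) (by omega)]

theorem cap_succ_T_cup_succ (hi : a ≤ i) (hik : i + 1 ≤ 2 * k) (v : MatchingModule p k) :
    cap (i + 1) (T i (cup (i + 1) v)) = p.r • v := by
  rw [← H.S_succ_cup hi hik, H.cap_S (by omega) hik, H.cap_succ_cup hi hik]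

theorem cap_succ_S_cup_succ (hi : a ≤ i) (hik : i + 1 ≤ 2 * k) (v : MatchingModule p k) :
    cap (i + 1) (S i (cup (i + 1) v)) = p.s • v := by
  rw [H.S_cup_succ hi hik, H.cap_T (by omega) hik, H.cap_succ_cup hi hik]

theorem chainS_cup_of_gt (hij : j + a + 1 ≤ i) (hi : i ≤ 2 * k) (v : MatchingModule p k) :
    chainS a j (cup i v) = cup i (chainS a j v) :=
  (map_chainS (cup i) (fun _ _ _ => (H.S_cup_of_lt (by omega) (by omega) hi _).symm) v).symm

theorem chainS_cup_of_le (hi : a ≤ i) (hij : i ≤ j + a) (hj : j + a + 1 ≤ 2 * k)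
    (v : MatchingModule p k) : chainS a (j + 2) (cup i v) = cup (i + 1) (chainS a j v) := by
  obtain ⟨i, rfl⟩ := Nat.exists_eq_add_of_le' hi
  obtain ⟨n, rfl⟩ := Nat.exists_eq_add_of_le (show i ≤ j by omega)
  clear hij
  induction n generalizing v with
  | zero =>
    simp only [Nat.add_zero, chainS_succ, Nat.add_right_comm i 1 a]
    rw [H.S_S_succ_cup hi (by omega), H.chainS_cup_of_gt (by omega) (by omega)]
  | succ n ih =>
    rw [← Nat.add_assoc, chainS_succ, show i + n + 1 + 1 + a = (i + n + a) + 2 by omega,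
      H.S_cup_of_gt hi (by omega) (by omega), ih _ (by omega), chainS_succ]

theorem cap_chainS_of_gt (hij : j + a + 1 ≤ i) (hi : i ≤ 2 * k)
    (v : MatchingModule p (k + 1)) : cap i (chainS a j v) = chainS a j (cap i v) :=
  map_chainS (cap i) (fun _ _ _ => H.cap_S_of_lt (by omega) (by omega) hi _) v

theorem cap_chainS_of_le (hi : a ≤ i) (hij : i ≤ j + a) (hj : j + a + 1 ≤ 2 * k)
    (v : MatchingModule p (k + 1)) :
    cap (i + 1) (chainS a (j + 2) v) = chainS a j (cap i v) := by
  obtain ⟨i, rfl⟩ := Nat.exists_eq_add_of_le' hi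
  obtain ⟨n, rfl⟩ := Nat.exists_eq_add_of_le (show i ≤ j by omega)
  clear hij
  induction n generalizing v with
  | zero =>
    simp only [Nat.add_zero, chainS_succ, Nat.add_right_comm i 1 a]
    rw [H.cap_chainS_of_gt (by omega) (by omega), H.cap_S_S_succ hi (by omega)]
  | succ n ih =>
    rw [← Nat.add_assoc, chainS_succ, ih _ (by omega),
      show i + n + 1 + 1 + a = (i + n + a) + 2 by omega,
      H.cap_S_of_gt hi (by omega) (by omega), chainS_succ]

theorem chainT_cup_of_gt (hij : j + a + 1 ≤ i) (hi : i ≤ 2 * k) (v : MatchingModule p k) :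
    chainT a j (cup i v) = cup i (chainT a j v) :=
  (map_chainT (cup i) (fun _ _ _ => (H.T_cup_of_lt (by omega) (by omega) hi _).symm) v).symm

theorem chainT_cup_of_le (hi : a ≤ i) (hij : i ≤ j + a) (hj : j + a + 1 ≤ 2 * k)
    (v : MatchingModule p k) : chainT a (j + 2) (cup (i + 1) v) = cup i (chainT a j v) := by
  obtain ⟨i, rfl⟩ := Nat.exists_eq_add_of_le' hi
  obtain ⟨n, rfl⟩ := Nat.exists_eq_add_of_le (show i ≤ j by omega)
  clear hij
  induction n with
  | zero =>
    simp only [Nat.add_zero, chainT_succ, Nat.add_right_comm i 1 a]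
    rw [H.chainT_cup_of_gt (by omega) (by omega), H.T_succ_T_cup hi (by omega)]
  | succ n ih =>
    rw [← Nat.add_assoc, chainT_succ, ih (by omega),
      show i + n + 1 + 1 + a = (i + n + a) + 2 by omega,
      H.T_cup_of_gt hi (by omega) (by omega), chainT_succ]

theorem cap_chainT_of_gt (hij : j + a + 1 ≤ i) (hi : i ≤ 2 * k)
    (v : MatchingModule p (k + 1)) : cap i (chainT a j v) = chainT a j (cap i v) :=
  map_chainT (cap i) (fun _ _ _ => H.cap_T_of_lt (by omega) (by omega) hi _) v

theorem cap_chainT_of_le (hi : a ≤ i) (hij : i ≤ j + a) (hj : j + a + 1 ≤ 2 * k)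
    (v : MatchingModule p (k + 1)) :
    cap i (chainT a (j + 2) v) = chainT a j (cap (i + 1) v) := by
  obtain ⟨i, rfl⟩ := Nat.exists_eq_add_of_le' hi
  obtain ⟨n, rfl⟩ := Nat.exists_eq_add_of_le (show i ≤ j by omega)
  clear hij
  induction n with
  | zero =>
    simp only [Nat.add_zero, chainT_succ, Nat.add_right_comm i 1 a]
    rw [H.cap_T_succ_T hi (by omega), H.cap_chainT_of_gt (by omega) (by omega)]
  | succ n ih =>
    rw [← Nat.add_assoc, chainT_succ, show i + n + 1 + 1 + a = (i + n + a) + 2 by omega,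
      H.cap_T_of_gt hi (by omega) (by omega), ih (by omega), chainT_succ]

theorem cap_chainS_succ (hj : j + a ≤ 2 * k) (v : MatchingModule p (k + 1)) :
    cap a (chainS a (j + 1) v) = p.r • cap (j + a) (chainT a j v) := by
  induction j generalizing v with
  | zero => simpa [chainS_succ] using H.cap_S le_rfl (by omega) v
  | succ j ih =>
    rw [chainS_succ, ih (by omega), H.chainT_S_of_gt (by omega) (by omega), chainT_succ,
      Nat.add_right_comm j 1 a, H.cap_S_succ (by omega) (by omega)]

theorem cap_chainS_succ_left (hj : j + a ≤ 2 * k) (v : MatchingModule p (k + 1)) :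
    cap a (chainS (a + 1) j v) = cap (j + a) (chainT a j v) := by
  induction j generalizing v with
  | zero => rw [chainS_zero, chainT_zero, Nat.zero_add]
  | succ j ih =>
    rw [chainS_succ, ih (by omega), H.chainT_S_of_gt (by omega) (by omega), chainT_succ,
      ← Nat.add_assoc, H.cap_S_succ (by omega) (by omega), Nat.add_right_comm j 1 a]

end TangleRelations

theorem TangleRelations.chainS_cup_self (H : TangleRelations p 0 k) (hj : j ≤ 2 * k)
    (v : MatchingModule p k) : chainS 0 j (cup j v) = arc j v := by
  induction j with
  | zero => exact cup_zero v
  | succ j ih =>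
    rw [chainS_zero_succ, H.S_cup_succ (Nat.zero_le j) hj,
      H.chainS_T_of_gt (by omega) (by omega), ih (by omega), T_arc_self _ (by omega)]

theorem chainT_arc_zero (hj : j ≤ 2 * k) (v : MatchingModule p k) :
    chainT 0 (j + 1) (arc 0 v) = p.s • arc j v := by
  induction j with
  | zero => exact T_zero_arc_zero v
  | succ j ih => rw [chainT_zero_succ, ih (by omega), map_smul, T_arc_self _ (by omega)]

end

section

variable {p : KauffmanParameters R} {k i j : ℕ}

theorem position_cases (x j : ℕ) :
    (∃ m, j = m + 1 ∧ x ≤ m) ∨ x = j ∨ x = j + 1 ∨ ∃ y, x = y + 2 ∧ j ≤ y := by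
  rcases lt_trichotomy x j with h | h | h
  · exact Or.inl ⟨j - 1, by omega, by omega⟩
  · exact Or.inr (Or.inl h)
  · refine Or.inr (Or.inr ?_)
    rcases Nat.eq_or_lt_of_le h with h | h
    · exact Or.inl h.symm
    · exact Or.inr ⟨x - 2, by omega, by omega⟩

theorem position_lt_or_ge (x j : ℕ) : (∃ m, j = m + 1 ∧ x ≤ m) ∨ j ≤ x := by
  rcases Nat.lt_or_ge x j with h | h
  · exact Or.inl ⟨j - 1, by omega, by omega⟩
  · exact Or.inr h

namespace TangleRelations

variable (H : TangleRelations p 0 k)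
include H

theorem cap_zero_cup (hj : j ≤ 2 * k) (v : MatchingModule p (k + 1)) :
    cap 0 (cup (j + 2) v) = cup j (cap 0 v) := by
  refine ext_arc (cap 0 ∘ₗ cup (j + 2)) (cup j ∘ₗ cap 0) (fun x hx v => ?_) v
  simp only [LinearMap.comp_apply]
  rcases x with _ | x
  · simp (disch := omega)
  rcases Nat.lt_or_ge x j with h | h
  · simp (disch := omega) [H.chainT_cup_of_gt]
  · simp (disch := omega) [H.chainT_cup_of_le]

theorem cap_zero_cap (hj : j ≤ 2 * k) (v : MatchingModule p (k + 2)) :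
    cap 0 (cap (j + 2) v) = cap j (cap 0 v) := by
  refine ext_arc (cap 0 ∘ₗ cap (j + 2)) (cap j ∘ₗ cap 0) (fun x hx v => ?_) v
  simp only [LinearMap.comp_apply]
  rcases x with _ | x
  · simp (disch := omega)
  rcases position_cases x j with ⟨j, rfl, h⟩ | rfl | rfl | ⟨x, rfl, h⟩
  · simp (disch := omega) [H.cap_chainT_of_gt]
  · simp (disch := omega) [H.cap_chainS_succ]
  · simp (disch := omega) [H.cap_chainS_succ, chainT_zero_succ, H.cap_T, smul_comm p.s p.r]
  · simp (disch := omega) [H.cap_chainT_of_le]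

end TangleRelations

namespace CupCapRelations

theorem zero (H : TangleRelations p 0 0) : CupCapRelations p 0 where
  cup_cup {i j} hij hj v := by
    obtain ⟨rfl, rfl⟩ : i = 0 ∧ j = 0 := by omega
    simp (disch := omega)
  cap_cap {i j} hij hj v := by
    obtain ⟨rfl, rfl⟩ : i = 0 ∧ j = 0 := by omega
    exact H.cap_zero_cap hj v
  cap_cup_of_lt {i j} hij hj v := by
    obtain ⟨rfl, rfl⟩ : i = 0 ∧ j = 0 := by omega
    simp (disch := omega)
  cap_cup_of_gt {i j} hij hj v := by
    obtain ⟨rfl, rfl⟩ : i = 0 ∧ j = 0 := by omega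
    exact H.cap_zero_cup hj v

variable (L : CupCapRelations p k)
include L

theorem cup_cup_succ (hij : i ≤ j) (hj : j + 1 ≤ 2 * (k + 1)) (v : MatchingModule p (k + 1)) :
    cup (j + 3) (cup (i + 1) v) = cup (i + 1) (cup (j + 1) v) := by
  refine ext_arc (cup (j + 3) ∘ₗ cup (i + 1)) (cup (i + 1) ∘ₗ cup (j + 1)) (fun x hx v => ?_) v
  simp only [LinearMap.comp_apply]
  obtain ⟨i, rfl, h⟩ | h := position_lt_or_ge x i
  · obtain ⟨j, rfl⟩ := Nat.exists_eq_add_of_le' (show 1 ≤ j by omega)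
    simp (disch := omega) [L.cup_cup]
  obtain ⟨j, rfl, h'⟩ | h' := position_lt_or_ge x j
  · simp (disch := omega) [L.cup_cup]
  · simp (disch := omega) [L.cup_cup]

variable (H₁ : TangleRelations p 0 (k + 1))
include H₁

theorem cap_cup_of_lt_succ (hij : i ≤ j) (hj : j + 1 ≤ 2 * (k + 1))
    (v : MatchingModule p (k + 2)) :
    cap (j + 3) (cup (i + 1) v) = cup (i + 1) (cap (j + 1) v) := by
  refine ext_arc (cap (j + 3) ∘ₗ cup (i + 1)) (cup (i + 1) ∘ₗ cap (j + 1)) (fun x hx v => ?_) v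
  simp only [LinearMap.comp_apply]
  obtain ⟨i, rfl, h⟩ | h := position_lt_or_ge x i
  · obtain ⟨j, rfl⟩ := Nat.exists_eq_add_of_le' (show 1 ≤ j by omega)
    simp (disch := omega) [L.cap_cup_of_lt]
  obtain ⟨j, rfl, h⟩ | rfl | rfl | ⟨x, rfl, h⟩ := position_cases x j
  · simp (disch := omega) [L.cap_cup_of_lt]
  · simp (disch := omega) [H₁.chainS_cup_of_le]
  · simp (disch := omega) [H₁.chainS_cup_of_le]
  · simp (disch := omega) [L.cap_cup_of_lt]

theorem cap_cup_of_gt_succ (hij : i ≤ j) (hj : j + 1 ≤ 2 * (k + 1))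
    (v : MatchingModule p (k + 2)) :
    cap (i + 1) (cup (j + 3) v) = cup (j + 1) (cap (i + 1) v) := by
  refine ext_arc (cap (i + 1) ∘ₗ cup (j + 3)) (cup (j + 1) ∘ₗ cap (i + 1)) (fun x hx v => ?_) v
  simp only [LinearMap.comp_apply]
  obtain ⟨i, rfl, h⟩ | rfl | rfl | ⟨x, rfl, h⟩ := position_cases x i
  · obtain ⟨j, rfl⟩ := Nat.exists_eq_add_of_le' (show 1 ≤ j by omega)
    simp (disch := omega) [L.cap_cup_of_gt]
  · simp (disch := omega) [H₁.chainS_cup_of_gt]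
  · simp (disch := omega) [H₁.chainS_cup_of_gt]
  obtain ⟨j, rfl, h'⟩ | h' := position_lt_or_ge x j
  · simp (disch := omega) [L.cap_cup_of_gt]
  · simp (disch := omega) [L.cap_cup_of_gt]

theorem cap_cap_succ (hij : i ≤ j) (hj : j + 1 ≤ 2 * (k + 1)) (v : MatchingModule p (k + 3)) :
    cap (i + 1) (cap (j + 3) v) = cap (j + 1) (cap (i + 1) v) := by
  refine ext_arc (cap (i + 1) ∘ₗ cap (j + 3)) (cap (j + 1) ∘ₗ cap (i + 1)) (fun x hx v => ?_) v
  simp only [LinearMap.comp_apply]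
  obtain ⟨i, rfl, h⟩ | rfl | rfl | ⟨x, rfl, h⟩ := position_cases x i
  · obtain ⟨j, rfl⟩ := Nat.exists_eq_add_of_le' (show 1 ≤ j by omega)
    simp (disch := omega) [L.cap_cap]
  · simp (disch := omega) [H₁.cap_chainS_of_gt]
  · simp (disch := omega) [H₁.cap_chainS_of_gt]
  obtain ⟨j, rfl, h⟩ | rfl | rfl | ⟨x, rfl, h⟩ := position_cases x j
  · simp (disch := omega) [L.cap_cap]
  · simp (disch := omega) [H₁.cap_chainS_of_le]
  · simp (disch := omega) [H₁.cap_chainS_of_le]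
  · simp (disch := omega) [L.cap_cap]

theorem succ : CupCapRelations p (k + 1) where
  cup_cup {i j} hij hj v := by
    rcases i with _ | i
    · simp (disch := omega)
    obtain ⟨j, rfl⟩ := Nat.exists_eq_add_of_le' (show 1 ≤ j by omega)
    exact L.cup_cup_succ (by omega) hj v
  cap_cap {i j} hij hj v := by
    rcases i with _ | i
    · exact H₁.cap_zero_cap hj v
    obtain ⟨j, rfl⟩ := Nat.exists_eq_add_of_le' (show 1 ≤ j by omega)
    exact L.cap_cap_succ H₁ (by omega) hj v
  cap_cup_of_lt {i j} hij hj v := by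
    rcases i with _ | i
    · simp (disch := omega)
    obtain ⟨j, rfl⟩ := Nat.exists_eq_add_of_le' (show 1 ≤ j by omega)
    exact L.cap_cup_of_lt_succ H₁ (by omega) hj v
  cap_cup_of_gt {i j} hij hj v := by
    rcases i with _ | i
    · exact H₁.cap_zero_cup hj v
    obtain ⟨j, rfl⟩ := Nat.exists_eq_add_of_le' (show 1 ≤ j by omega)
    exact L.cap_cup_of_gt_succ H₁ (by omega) hj v

end CupCapRelations

end

section

variable {p : KauffmanParameters R} {k i j : ℕ} {N : Type*} [AddCommGroup N] [Module R N]

theorem position_lt_or_eq_or_gt (x j : ℕ) :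
    (∃ m, j = m + 1 ∧ x ≤ m) ∨ x = j ∨ ∃ y, x = y + 1 ∧ j ≤ y := by
  rcases lt_trichotomy x j with h | h | h
  · exact Or.inl ⟨j - 1, by omega, by omega⟩
  · exact Or.inr (Or.inl h)
  · exact Or.inr (Or.inr ⟨x - 1, by omega, by omega⟩)

theorem z_mul_s_smul_r_smul (p : KauffmanParameters R) (v : N) :
    (p.z * p.s) • p.r • v = p.z • v := by
  rw [mul_smul, s_smul_r_smul]

theorem s_mul_s (p : KauffmanParameters R) : p.s * p.s = 1 + p.z * p.s - p.z * p.s * p.d := by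
  linear_combination p.s * p.z_mul_d + p.r_mul_s

theorem T_braid_arc_self (hi : i + 2 ≤ 2 * (k + 1)) (v : MatchingModule p (k + 1)) :
    T (i + 1) (T (i + 2) (T (i + 1) (arc i v))) =
      T (i + 2) (T (i + 1) (T (i + 2) (arc i v))) := by
  simp (disch := omega)

theorem T_comm_arc_self (hij : i + 2 ≤ j) (hj : j + 1 ≤ 2 * (k + 1))
    (v : MatchingModule p (k + 1)) :
    T (i + 1) (T (j + 1) (arc i v)) = T (j + 1) (T (i + 1) (arc i v)) := by
  obtain ⟨j, rfl⟩ := Nat.exists_eq_add_of_le' (show 1 ≤ j by omega)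
  simp (disch := omega)

theorem T_comm_arc_right (hij : i + 2 ≤ j) (hj : j + 1 ≤ 2 * (k + 1))
    (v : MatchingModule p (k + 1)) :
    T (i + 1) (T (j + 1) (arc j v)) = T (j + 1) (T (i + 1) (arc j v)) := by
  obtain ⟨j, rfl⟩ := Nat.exists_eq_add_of_le' (show 2 ≤ j by omega)
  simp (disch := omega)

theorem comm_apply_of_quadratic {A B E : Module.End R N} {z c : R} {u : N}
    (hA : ∀ w, A (A w) = w + z • A w - c • E w) (hE : ∀ w, E (B w) = B (E w))
    (hu : A (B u) = B (A u)) : A (B (A u)) = B (A (A u)) := by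
  rw [← hu, hA, hA, map_sub, map_add, map_smul, map_smul, hE, hu]

theorem braid_apply_of_quadratic {A B E F : Module.End R N} {z c : R} {u : N}
    (hA : ∀ w, A (A w) = w + z • A w - c • E w) (hB : ∀ w, B (B w) = w + z • B w - c • F w)
    (hE : ∀ w, A (B (E w)) = F (A (B w))) (hu : A (B (A u)) = B (A (B u))) :
    A (B (A (A u))) = B (A (B (A u))) := by
  rw [hu, hB, hA]
  simp only [map_sub, map_add, map_smul]
  rw [hE, hu]

variable (p) in
/-- The relations between all crossings, cups and caps joining `2 * k` to `2 * (k + 1)` points,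
with those between the cups and caps of the next level: the induction hypothesis of the
construction of the tangle action. -/
structure KauffmanRelations (k : ℕ) : Prop extends TangleRelations p 0 k, CupCapRelations p k

namespace KauffmanRelations

section PositiveIndex

variable (K : KauffmanRelations p k)
include K

theorem cap_cup_of_pos (hi : i + 1 ≤ 2 * (k + 1)) (v : MatchingModule p (k + 1)) :
    cap (i + 1) (cup (i + 1) v) = p.d • v := by
  refine ext_arc (cap (i + 1) ∘ₗ cup (i + 1)) (p.d • LinearMap.id) (fun x hx v => ?_) v
  simp only [LinearMap.comp_apply, LinearMap.smul_apply, LinearMap.id_apply]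
  obtain ⟨i, rfl, h⟩ | h := position_lt_or_ge x i <;> simp (disch := omega) [K.cap_cup]

theorem cap_cup_succ_of_pos (hi : i + 2 ≤ 2 * (k + 1)) (v : MatchingModule p (k + 1)) :
    cap (i + 1) (cup (i + 2) v) = v := by
  refine ext_arc (cap (i + 1) ∘ₗ cup (i + 2)) LinearMap.id (fun x hx v => ?_) v
  simp only [LinearMap.comp_apply, LinearMap.id_apply]
  obtain ⟨i, rfl, h⟩ | rfl | ⟨x, rfl, h⟩ := position_lt_or_eq_or_gt x i <;>
    simp (disch := omega) [K.cap_cup_succ, K.chainS_cup_self]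

theorem cap_succ_cup_of_pos (hi : i + 2 ≤ 2 * (k + 1)) (v : MatchingModule p (k + 1)) :
    cap (i + 2) (cup (i + 1) v) = v := by
  refine ext_arc (cap (i + 2) ∘ₗ cup (i + 1)) LinearMap.id (fun x hx v => ?_) v
  simp only [LinearMap.comp_apply, LinearMap.id_apply]
  obtain ⟨i, rfl, h⟩ | rfl | ⟨x, rfl, h⟩ := position_lt_or_eq_or_gt x i
  · simp (disch := omega) [K.cap_succ_cup]
  · simp (disch := omega) [chainS_zero_succ, K.S_cup, K.chainS_cup_self, s_smul_r_smul]
  · simp (disch := omega) [K.cap_succ_cup]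

theorem T_cup_of_pos (hi : i + 1 ≤ 2 * (k + 1)) (v : MatchingModule p (k + 1)) :
    T (i + 1) (cup (i + 1) v) = p.s • cup (i + 1) v := by
  refine ext_arc (T (i + 1) ∘ₗ cup (i + 1)) (p.s • cup (i + 1)) (fun x hx v => ?_) v
  simp only [LinearMap.comp_apply, LinearMap.smul_apply]
  obtain ⟨i, rfl, h⟩ | h := position_lt_or_ge x i <;> simp (disch := omega) [K.T_cup]

theorem cap_T_of_pos (hi : i + 1 ≤ 2 * (k + 1)) (v : MatchingModule p (k + 2)) :
    cap (i + 1) (T (i + 1) v) = p.s • cap (i + 1) v := by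
  refine ext_arc (cap (i + 1) ∘ₗ T (i + 1)) (p.s • cap (i + 1)) (fun x hx v => ?_) v
  simp only [LinearMap.comp_apply, LinearMap.smul_apply]
  obtain ⟨i, rfl, h⟩ | rfl | rfl | ⟨x, rfl, h⟩ := position_cases x i
  · simp (disch := omega) [K.cap_T]
  · simp (disch := omega)
  · simp (disch := omega) only [T_arc_succ, map_sub, map_add, map_smul, cap_arc_succ, cap_arc_self,
      K.cap_cup_of_pos, smul_smul p.s p.s, s_mul_s]
    module
  · simp (disch := omega) [K.cap_T]

theorem T_S_of_pos (hi : i + 1 ≤ 2 * (k + 1)) (v : MatchingModule p (k + 2)) :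
    T (i + 1) (S (i + 1) v) = v := by
  refine ext_arc (T (i + 1) ∘ₗ S (i + 1)) LinearMap.id (fun x hx v => ?_) v
  simp only [LinearMap.comp_apply, LinearMap.id_apply]
  obtain ⟨i, rfl, h⟩ | rfl | rfl | ⟨x, rfl, h⟩ := position_cases x i
  · simp (disch := omega) [K.T_S]
  · simp (disch := omega) only [S_arc_self, T_arc_self, T_arc_succ, map_sub, map_smul,
      K.T_cup_of_pos]
    module
  · simp (disch := omega)
  · simp (disch := omega) [K.T_S]

theorem T_cup_of_lt_of_pos (hij : i + 2 ≤ j) (hj : j + 1 ≤ 2 * (k + 1))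
    (v : MatchingModule p (k + 1)) : T (i + 1) (cup (j + 1) v) = cup (j + 1) (T (i + 1) v) := by
  refine ext_arc (T (i + 1) ∘ₗ cup (j + 1)) (cup (j + 1) ∘ₗ T (i + 1)) (fun x hx v => ?_) v
  simp only [LinearMap.comp_apply]
  obtain ⟨j, rfl⟩ := Nat.exists_eq_add_of_le' (show 1 ≤ j by omega)
  obtain ⟨i, rfl, h⟩ | rfl | rfl | ⟨x, rfl, h⟩ := position_cases x i
  · simp (disch := omega) [K.T_cup_of_lt]
  · simp (disch := omega)
  · simp (disch := omega) [K.cup_cup, K.chainS_cup_of_gt]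
  obtain h' | h' := Nat.lt_or_ge j (x + 2) <;> simp (disch := omega) [K.T_cup_of_lt]

theorem T_cup_of_gt_of_pos (hij : j ≤ i) (hi : i + 2 < 2 * (k + 1))
    (v : MatchingModule p (k + 1)) : T (i + 3) (cup (j + 1) v) = cup (j + 1) (T (i + 1) v) := by
  refine ext_arc (T (i + 3) ∘ₗ cup (j + 1)) (cup (j + 1) ∘ₗ T (i + 1)) (fun x hx v => ?_) v
  simp only [LinearMap.comp_apply]
  obtain ⟨i, rfl, h⟩ | rfl | rfl | ⟨x, rfl, h⟩ := position_cases x i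
  · obtain ⟨j, rfl, h'⟩ | h' := position_lt_or_ge x j <;>
      simp (disch := omega) [K.T_cup_of_gt]
  · simp (disch := omega)
  · simp (disch := omega) [K.chainS_cup_of_le, ← K.cup_cup]
  · simp (disch := omega) [K.T_cup_of_gt]

theorem cap_T_of_lt_of_pos (hij : i + 2 ≤ j) (hj : j + 1 ≤ 2 * (k + 1))
    (v : MatchingModule p (k + 2)) : cap (j + 1) (T (i + 1) v) = T (i + 1) (cap (j + 1) v) := by
  refine ext_arc (cap (j + 1) ∘ₗ T (i + 1)) (T (i + 1) ∘ₗ cap (j + 1)) (fun x hx v => ?_) v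
  simp only [LinearMap.comp_apply]
  obtain ⟨j, rfl, h⟩ | rfl | rfl | ⟨x, rfl, h⟩ := position_cases x j
  · obtain ⟨i, rfl, h'⟩ | rfl | rfl | ⟨x, rfl, h'⟩ := position_cases x i
    · simp (disch := omega) [K.cap_T_of_lt]
    · simp (disch := omega)
    · simp (disch := omega) [K.cap_cup_of_lt, K.cap_chainS_of_gt]
    · simp (disch := omega) [K.cap_T_of_lt]
  · obtain ⟨j, rfl⟩ := Nat.exists_eq_add_of_le' (show 2 ≤ x by omega)
    simp (disch := omega) [K.chainS_T_of_lt]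
  · obtain ⟨j, rfl⟩ := Nat.exists_eq_add_of_le' (show 1 ≤ j by omega)
    simp (disch := omega) [K.chainS_T_of_lt]
  · obtain ⟨x, rfl⟩ := Nat.exists_eq_add_of_le' (show 2 ≤ x by omega)
    simp (disch := omega) [K.cap_T_of_lt]

theorem cap_T_of_gt_of_pos (hij : j ≤ i) (hi : i + 2 < 2 * (k + 1))
    (v : MatchingModule p (k + 2)) : cap (j + 1) (T (i + 3) v) = T (i + 1) (cap (j + 1) v) := by
  refine ext_arc (cap (j + 1) ∘ₗ T (i + 3)) (T (i + 1) ∘ₗ cap (j + 1)) (fun x hx v => ?_) v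
  simp only [LinearMap.comp_apply]
  obtain ⟨j, rfl, h⟩ | rfl | rfl | ⟨x, rfl, h⟩ := position_cases x j
  · obtain ⟨i, rfl⟩ := Nat.exists_eq_add_of_le' (show 1 ≤ i by omega)
    simp (disch := omega) [K.cap_T_of_gt]
  · simp (disch := omega) [K.chainS_T_of_gt]
  · simp (disch := omega) [K.chainS_T_of_gt]
  obtain ⟨i, rfl, h'⟩ | rfl | rfl | ⟨x, rfl, h'⟩ := position_cases x i
  · simp (disch := omega) [K.cap_T_of_gt]
  · simp (disch := omega)
  · simp (disch := omega) [K.cap_cup_of_gt, K.cap_chainS_of_le]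
  · simp (disch := omega) [K.cap_T_of_gt]

theorem T_T_succ_cup_of_pos (hi : i + 2 ≤ 2 * (k + 1)) (v : MatchingModule p (k + 1)) :
    T (i + 1) (T (i + 2) (cup (i + 1) v)) = cup (i + 2) v := by
  refine ext_arc (T (i + 1) ∘ₗ T (i + 2) ∘ₗ cup (i + 1)) (cup (i + 2)) (fun x hx v => ?_) v
  simp only [LinearMap.comp_apply]
  obtain ⟨i, rfl, h⟩ | rfl | ⟨x, rfl, h⟩ := position_lt_or_eq_or_gt x i
  · simp (disch := omega) [K.T_T_succ_cup]
  · simp (disch := omega) only [cup_arc_of_le, T_arc_succ, chainS_zero_succ, K.S_cup, map_smul,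
      K.chainS_cup_self, cup_arc_of_lt, map_sub, map_add, T_arc_of_gt, K.T_cup, T_arc_self]
    rw [z_mul_s_smul_r_smul]
    module
  · simp (disch := omega) [K.T_T_succ_cup]

theorem T_succ_T_cup_of_pos (hi : i + 2 ≤ 2 * (k + 1)) (v : MatchingModule p (k + 1)) :
    T (i + 2) (T (i + 1) (cup (i + 2) v)) = cup (i + 1) v := by
  refine ext_arc (T (i + 2) ∘ₗ T (i + 1) ∘ₗ cup (i + 2)) (cup (i + 1)) (fun x hx v => ?_) v
  simp only [LinearMap.comp_apply]
  obtain ⟨i, rfl, h⟩ | rfl | ⟨x, rfl, h⟩ := position_lt_or_eq_or_gt x i <;>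
    simp (disch := omega) [K.T_succ_T_cup]

theorem S_T_of_pos (hi : i + 1 ≤ 2 * (k + 1)) (v : MatchingModule p (k + 2)) :
    S (i + 1) (T (i + 1) v) = v :=
  S_T_of_T_S (K.T_S_of_pos hi) (K.T_cup_of_pos hi) (K.cap_T_of_pos hi) v

theorem cap_succ_T_cup_succ_of_pos (hi : i + 2 ≤ 2 * (k + 1)) (v : MatchingModule p (k + 1)) :
    cap (i + 2) (T (i + 1) (cup (i + 2) v)) = p.r • v := by
  rw [← r_smul_s_smul p (cap (i + 2) _), ← K.cap_T_of_pos hi, K.T_succ_T_cup_of_pos hi,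
    K.cap_succ_cup_of_pos hi]

theorem cap_T_succ_cup_of_pos (hi : i + 2 ≤ 2 * (k + 1)) (v : MatchingModule p (k + 1)) :
    cap (i + 1) (T (i + 2) (cup (i + 1) v)) = p.r • v := by
  rw [← r_smul_s_smul p (cap (i + 1) _), ← K.cap_T_of_pos (by omega), K.T_T_succ_cup_of_pos hi,
    K.cap_cup_succ_of_pos hi]

theorem cap_T_T_succ_of_pos (hi : i + 2 ≤ 2 * (k + 1)) (v : MatchingModule p (k + 2)) :
    cap (i + 2) (T (i + 1) (T (i + 2) v)) = cap (i + 1) v := by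
  refine ext_arc (cap (i + 2) ∘ₗ T (i + 1) ∘ₗ T (i + 2)) (cap (i + 1)) (fun x hx v => ?_) v
  simp only [LinearMap.comp_apply]
  obtain ⟨i, rfl, h⟩ | rfl | rfl | ⟨x, rfl, h⟩ := position_cases x i
  · simp (disch := omega) [K.cap_T_T_succ]
  · simp (disch := omega) [chainS_zero_succ, K.S_T]
  · simp (disch := omega) [chainS_zero_succ, K.S_T]
  obtain ⟨i, rfl, h'⟩ | h' := position_lt_or_ge i x
  · simp (disch := omega) [K.cap_T_T_succ]
  obtain rfl : x = i := by omega
  simp (disch := omega) only [T_arc_succ, chainS_zero_succ, map_sub, map_add, map_smul,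
    T_arc_of_gt, cap_arc_of_lt, cap_arc_self, K.cap_succ_cup_of_pos, cap_arc_succ, K.S_T,
    K.cap_succ_T_cup_succ_of_pos, cap_arc_of_gt]
  rw [z_mul_s_smul_r_smul]
  module

theorem cap_T_succ_T_of_pos (hi : i + 2 ≤ 2 * (k + 1)) (v : MatchingModule p (k + 2)) :
    cap (i + 1) (T (i + 2) (T (i + 1) v)) = cap (i + 2) v := by
  refine ext_arc (cap (i + 1) ∘ₗ T (i + 2) ∘ₗ T (i + 1)) (cap (i + 2)) (fun x hx v => ?_) v
  simp only [LinearMap.comp_apply]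
  obtain ⟨i, rfl, h⟩ | rfl | rfl | ⟨x, rfl, h⟩ := position_cases x i
  · simp (disch := omega) [K.cap_T_succ_T]
  · simp (disch := omega)
  · simp (disch := omega) only [T_arc_succ, map_sub, map_add, T_arc_of_lt, map_smul, T_arc_self,
      cap_arc_self, cap_arc_of_gt, K.cap_T_succ_cup_of_pos, chainS_zero_succ, S_apply,
      K.chainS_cup_self]
    rw [z_mul_s_smul_r_smul]
    module
  obtain ⟨i, rfl, h'⟩ | h' := position_lt_or_ge i x
  · simp (disch := omega) [K.cap_T_succ_T]
  obtain rfl : x = i := by omega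
  simp (disch := omega) only [T_arc_of_gt, T_arc_succ, chainS_zero_succ, K.S_T, map_sub, map_add,
    cap_arc_succ, map_smul, cap_arc_of_gt, K.cap_T, K.cap_cup_succ_of_pos, S_apply,
    K.chainS_cup_self]
  module

theorem T_sq_of_pos (hi : i + 1 ≤ 2 * (k + 1)) (v : MatchingModule p (k + 2)) :
    T (i + 1) (T (i + 1) v) =
      v + p.z • T (i + 1) v - (p.z * p.s) • cup (i + 1) (cap (i + 1) v) :=
  T_sq_of_T_S (K.T_S_of_pos hi v) (K.T_cup_of_pos hi _)

theorem T_braid_arc_succ (hi : i + 2 ≤ 2 * (k + 1)) (v : MatchingModule p (k + 1)) :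
    T (i + 1) (T (i + 2) (T (i + 1) (arc (i + 1) v))) =
      T (i + 2) (T (i + 1) (T (i + 2) (arc (i + 1) v))) := by
  rw [← T_arc_self v (show i ≤ 2 * (k + 1) by omega)]
  refine braid_apply_of_quadratic (E := cup (i + 1) ∘ₗ cap (i + 1))
    (F := cup (i + 2) ∘ₗ cap (i + 2)) (K.T_sq_of_pos (by omega)) (K.T_sq_of_pos hi) (fun w => ?_)
    (T_braid_arc_self hi v)
  simp only [LinearMap.comp_apply]
  rw [K.T_T_succ_cup_of_pos hi, K.cap_T_T_succ_of_pos hi]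

theorem T_braid_of_pos (hi : i + 2 ≤ 2 * (k + 1)) (v : MatchingModule p (k + 2)) :
    T (i + 1) (T (i + 2) (T (i + 1) v)) = T (i + 2) (T (i + 1) (T (i + 2) v)) := by
  refine ext_arc (T (i + 1) ∘ₗ T (i + 2) ∘ₗ T (i + 1)) (T (i + 2) ∘ₗ T (i + 1) ∘ₗ T (i + 2))
    (fun x hx v => ?_) v
  simp only [LinearMap.comp_apply]
  obtain ⟨i, rfl, h⟩ | rfl | rfl | ⟨x, rfl, h⟩ := position_cases x i
  · simp (disch := omega) [K.T_braid]
  · exact T_braid_arc_self hi v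
  · exact K.T_braid_arc_succ hi v
  obtain ⟨x, rfl, h⟩ | h := position_lt_or_ge i x
  · simp (disch := omega) [K.T_braid]
  obtain rfl : x = i := by omega
  rw [← T_arc_self v (show x + 1 ≤ 2 * (k + 1) by omega)]
  refine (braid_apply_of_quadratic (E := cup (x + 2) ∘ₗ cap (x + 2))
    (F := cup (x + 1) ∘ₗ cap (x + 1)) (K.T_sq_of_pos hi) (K.T_sq_of_pos (by omega))
    (fun w => ?_) (K.T_braid_arc_succ hi v).symm).symm
  simp only [LinearMap.comp_apply]
  rw [K.T_succ_T_cup_of_pos hi, K.cap_T_succ_T_of_pos hi]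

theorem T_comm_of_pos (hij : i + 2 ≤ j) (hj : j + 1 ≤ 2 * (k + 1))
    (v : MatchingModule p (k + 2)) : T (i + 1) (T (j + 1) v) = T (j + 1) (T (i + 1) v) := by
  refine ext_arc (T (i + 1) ∘ₗ T (j + 1)) (T (j + 1) ∘ₗ T (i + 1)) (fun x hx v => ?_) v
  simp only [LinearMap.comp_apply]
  obtain ⟨j, rfl, h⟩ | rfl | rfl | ⟨x, rfl, h⟩ := position_cases x j
  · obtain ⟨i, rfl, h'⟩ | rfl | rfl | ⟨x, rfl, h'⟩ := position_cases x i
    · simp (disch := omega) [K.T_comm]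
    · exact T_comm_arc_self hij hj v
    · rw [← T_arc_self v (show i ≤ 2 * (k + 1) by omega)]
      obtain ⟨j, rfl⟩ := Nat.exists_eq_add_of_le' (show 1 ≤ j by omega)
      refine comm_apply_of_quadratic (E := cup (i + 1) ∘ₗ cap (i + 1)) (K.T_sq_of_pos (by omega))
        (fun w => ?_) (T_comm_arc_self hij hj v)
      simp only [LinearMap.comp_apply]
      rw [K.cap_T_of_gt_of_pos (by omega) (by omega), K.T_cup_of_gt_of_pos (by omega) (by omega)]
    · simp (disch := omega) [← K.T_comm]
  · exact T_comm_arc_right hij hj v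
  · rw [← T_arc_self v (show j ≤ 2 * (k + 1) by omega)]
    refine (comm_apply_of_quadratic (E := cup (j + 1) ∘ₗ cap (j + 1)) (K.T_sq_of_pos hj)
      (fun w => ?_) (T_comm_arc_right hij hj v).symm).symm
    simp only [LinearMap.comp_apply]
    rw [K.cap_T_of_lt_of_pos hij hj, K.T_cup_of_lt_of_pos hij hj]
  · obtain ⟨x, rfl⟩ := Nat.exists_eq_add_of_le' (show 2 ≤ x by omega)
    simp (disch := omega) [← K.T_comm]

theorem braidRelations_one : BraidRelations p 1 (k + 2) where
  T_S := @fun | _ + 1, _, h, v => K.T_S_of_pos (by omega) v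
  S_T := @fun | _ + 1, _, h, v => K.S_T_of_pos (by omega) v
  T_comm := @fun | _ + 1, _ + 1, _, hij, h, v => K.T_comm_of_pos (by omega) (by omega) v
  T_braid := @fun | _ + 1, _, h, v => K.T_braid_of_pos (by omega) v

theorem tangleRelations_one : TangleRelations p 1 (k + 1) where
  toBraidRelations := K.braidRelations_one
  lower := K.toBraidRelations.mono (Nat.zero_le 1)
  cap_cup := @fun | _ + 1, _, h, v => K.cap_cup_of_pos h v
  cap_cup_succ := @fun | _ + 1, _, h, v => K.cap_cup_succ_of_pos h v
  cap_succ_cup := @fun | _ + 1, _, h, v => K.cap_succ_cup_of_pos h v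
  T_cup := @fun | _ + 1, _, h, v => K.T_cup_of_pos h v
  cap_T := @fun | _ + 1, _, h, v => K.cap_T_of_pos h v
  T_cup_of_lt := @fun | _ + 1, _ + 1, _, hij, h, v => K.T_cup_of_lt_of_pos (by omega) h v
  T_cup_of_gt := @fun
    | 0, _, hj, hij, _, _ => by omega
    | _ + 1, _ + 1, _, hij, h, v => K.T_cup_of_gt_of_pos (by omega) h v
  cap_T_of_lt := @fun | _ + 1, _ + 1, _, hij, h, v => K.cap_T_of_lt_of_pos (by omega) h v
  cap_T_of_gt := @fun
    | 0, _, hj, hij, _, _ => by omega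
    | _ + 1, _ + 1, _, hij, h, v => K.cap_T_of_gt_of_pos (by omega) h v
  T_T_succ_cup := @fun | _ + 1, _, h, v => K.T_T_succ_cup_of_pos h v
  T_succ_T_cup := @fun | _ + 1, _, h, v => K.T_succ_T_cup_of_pos h v
  cap_T_T_succ := @fun | _ + 1, _, h, v => K.cap_T_T_succ_of_pos h v
  cap_T_succ_T := @fun | _ + 1, _, h, v => K.cap_T_succ_T_of_pos h v

end PositiveIndex

end KauffmanRelations

end

section

variable {p : KauffmanParameters R} {k i j : ℕ}

theorem cap_zero_cup_one (v : MatchingModule p (k + 1)) : cap 0 (cup 1 v) = v := by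
  refine ext_arc (cap 0 ∘ₗ cup 1) LinearMap.id (fun x hx v => ?_) v
  simp (disch := omega) [chainT_arc_zero, r_smul_s_smul]

theorem cap_one_cup_zero (v : MatchingModule p (k + 1)) : cap 1 (cup 0 v) = v := by
  simp (disch := omega)

theorem T_zero_T_one_cup_zero (v : MatchingModule p (k + 1)) :
    T 0 (T 1 (cup 0 v)) = cup 1 v := by
  simp (disch := omega)

theorem chainS_arc_zero (hj : j ≤ 2 * k + 2) (v : MatchingModule p (k + 1)) :
    chainS 2 j (arc 0 v) = arc 0 (chainS 0 j v) := by
  induction j generalizing v with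
  | zero => rfl
  | succ j ih =>
    rw [chainS_succ, chainS_zero_succ, S_arc_of_lt (Nat.zero_le j) (Nat.zero_le _), ih (by omega)]

namespace KauffmanRelations

section IndexZero

variable (K : KauffmanRelations p k)
include K

theorem cap_zero_T_of_gt (hi : i + 1 < 2 * (k + 1)) (v : MatchingModule p (k + 2)) :
    cap 0 (T (i + 2) v) = T i (cap 0 v) := by
  refine ext_arc (cap 0 ∘ₗ T (i + 2)) (T i ∘ₗ cap 0) (fun x hx v => ?_) v
  simp only [LinearMap.comp_apply]
  rcases x with _ | x
  · simp (disch := omega)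
  obtain ⟨i, rfl, h⟩ | rfl | rfl | ⟨x, rfl, h⟩ := position_cases x i
  · simp (disch := omega) [K.chainT_T_of_gt]
  · simp (disch := omega) [chainT_zero_succ]
  · simp (disch := omega) only [T_arc_succ, map_sub, map_add, map_smul, cap_zero_arc_succ,
      chainT_zero_succ, K.cap_cup_of_gt, K.cap_chainS_succ]
    rw [T_sq_of_T_S (K.T_S (Nat.zero_le i) hi _) (K.T_cup (Nat.zero_le i) (by omega) _)]
    module
  · simp (disch := omega) [K.chainT_T_of_lt]

theorem cap_T_zero_of_lt (hj : j + 2 ≤ 2 * (k + 1)) (v : MatchingModule p (k + 2)) :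
    cap (j + 2) (T 0 v) = T 0 (cap (j + 2) v) := by
  refine ext_arc (cap (j + 2) ∘ₗ T 0) (T 0 ∘ₗ cap (j + 2)) (fun x hx v => ?_) v
  simp only [LinearMap.comp_apply]
  have K₁ := K.tangleRelations_one
  rcases x with _ | x
  · simp (disch := omega)
  obtain ⟨j, rfl, h⟩ | rfl | rfl | ⟨x, rfl, h⟩ := position_cases x j
  · simp (disch := omega) [K₁.cap_chainS_of_gt, K.cap_cup_of_lt]
  · simp (disch := omega) [K₁.cap_chainS_of_gt, K₁.cap_succ_cup, K.T_chainS_succ]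
  · simp (disch := omega) [chainS_succ _ 1, K₁.cap_chainS_of_gt, K₁.cap_succ_S_cup_succ,
      K.T_chainS_succ]
  · simp (disch := omega) [K₁.cap_chainS_of_le, K.cap_cup_of_gt]

theorem T_zero_cup_of_lt (hj : j + 2 ≤ 2 * (k + 1)) (v : MatchingModule p (k + 1)) :
    T 0 (cup (j + 2) v) = cup (j + 2) (T 0 v) := by
  refine ext_arc (T 0 ∘ₗ cup (j + 2)) (cup (j + 2) ∘ₗ T 0) (fun x hx v => ?_) v
  simp only [LinearMap.comp_apply]
  have K₁ := K.tangleRelations_one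
  rcases x with _ | x
  · simp (disch := omega)
  rcases Nat.lt_or_ge x j with h | h
  · simp (disch := omega) [← K.cup_cup, K₁.chainS_cup_of_gt]
  · simp (disch := omega) [K.cup_cup, K₁.chainS_cup_of_le]

theorem T_zero_comm_arc_succ (hj : j + 2 ≤ 2 * (k + 1)) (v : MatchingModule p (k + 1)) :
    T 0 (T (j + 2) (arc (j + 1) v)) = T (j + 2) (T 0 (arc (j + 1) v)) := by
  have K₁ := K.tangleRelations_one
  simp (disch := omega) [chainS_succ, K₁.S_cup_succ, K.braidRelations_one.chainS_T_of_gt]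

theorem T_zero_comm (hj : j + 2 ≤ 2 * (k + 1)) (v : MatchingModule p (k + 2)) :
    T 0 (T (j + 2) v) = T (j + 2) (T 0 v) := by
  refine ext_arc (T 0 ∘ₗ T (j + 2)) (T (j + 2) ∘ₗ T 0) (fun x hx v => ?_) v
  simp only [LinearMap.comp_apply]
  have K₁ := K.tangleRelations_one
  rcases x with _ | x
  · simp (disch := omega)
  obtain ⟨j, rfl, h⟩ | rfl | rfl | ⟨x, rfl, h⟩ := position_cases x j
  · simp (disch := omega) [← K₁.T_cup_of_gt, K₁.chainS_T_of_gt]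
  · exact K.T_zero_comm_arc_succ hj v
  · rw [← T_arc_self v (show j + 1 ≤ 2 * (k + 1) by omega)]
    refine (comm_apply_of_quadratic (E := cup (j + 2) ∘ₗ cap (j + 2)) (K.T_sq_of_pos hj)
      (fun w => ?_) (K.T_zero_comm_arc_succ hj v).symm).symm
    simp only [LinearMap.comp_apply]
    rw [K.cap_T_zero_of_lt hj, K.T_zero_cup_of_lt hj]
  · simp (disch := omega) [← K₁.T_cup_of_lt, K₁.chainS_T_of_lt]

theorem T_zero_S_comm (hj : j + 2 ≤ 2 * (k + 1)) (v : MatchingModule p (k + 2)) :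
    T 0 (S (j + 2) v) = S (j + 2) (T 0 v) := by
  conv_rhs => rw [← K.T_S_of_pos hj v]
  rw [K.T_zero_comm hj, K.S_T_of_pos hj]

theorem T_zero_chainS_two (hj : j ≤ 2 * k + 1) (v : MatchingModule p (k + 2)) :
    T 0 (chainS 2 j v) = chainS 2 j (T 0 v) :=
  map_chainS (T 0) (fun i hi => K.T_zero_S_comm (by omega)) v

theorem T_one_T_zero_cup_one (v : MatchingModule p (k + 1)) :
    T 1 (T 0 (cup 1 v)) = cup 0 v := by
  refine ext_arc (T 1 ∘ₗ T 0 ∘ₗ cup 1) (cup 0) (fun x hx v => ?_) v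
  simp (disch := omega) [K.braidRelations_one.T_chainS_succ, chainS_arc_zero, K.chainS_cup_self]

theorem cap_one_T_zero_cup_one (v : MatchingModule p (k + 1)) :
    cap 1 (T 0 (cup 1 v)) = p.r • v := by
  rw [← r_smul_s_smul p (cap 1 _), ← K.cap_T_of_pos (by omega), K.T_one_T_zero_cup_one,
    cap_one_cup_zero]

theorem cap_one_T_zero_T_one (v : MatchingModule p (k + 2)) :
    cap 1 (T 0 (T 1 v)) = cap 0 v := by
  refine ext_arc (cap 1 ∘ₗ T 0 ∘ₗ T 1) (cap 0) (fun x hx v => ?_) v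
  simp only [LinearMap.comp_apply]
  have K₁ := K.tangleRelations_one
  rcases x with _ | _ | x
  · simp (disch := omega) [K₁.cap_cup]
  · simp (disch := omega) only [T_arc_succ, map_sub, map_add, map_smul, T_zero_arc_zero,
      T_zero_arc_succ, chainS_zero, cap_arc_self, K₁.cap_cup, K.cap_one_T_zero_cup_one,
      cap_zero_arc_succ, chainT_zero]
    rw [z_mul_s_smul_r_smul]
    match_scalars
    linear_combination p.z_mul_d
  · simp (disch := omega) [chainS_succ_eq_S, chainT_succ_eq_chainT, K₁.cap_S,
      K₁.cap_chainS_succ_left, K₁.chainT_cup_of_gt, K₁.cap_cup_succ]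

theorem cap_zero_S_of_gt (hi : i + 1 < 2 * (k + 1)) (v : MatchingModule p (k + 2)) :
    cap 0 (S (i + 2) v) = S i (cap 0 v) := by
  conv_rhs => rw [← K.T_S_of_pos (show i + 2 ≤ 2 * (k + 1) by omega) v]
  rw [K.cap_zero_T_of_gt hi, K.S_T (Nat.zero_le i) hi]

theorem cap_zero_T_one_T_zero (v : MatchingModule p (k + 2)) :
    cap 0 (T 1 (T 0 v)) = cap 1 v := by
  refine ext_arc (cap 0 ∘ₗ T 1 ∘ₗ T 0) (cap 1) (fun x hx v => ?_) v
  simp only [LinearMap.comp_apply]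
  have K₁ := K.tangleRelations_one
  rcases x with _ | _ | x
  · simp (disch := omega) [s_smul_r_smul]
  · simp (disch := omega) [K₁.T_cup, cap_zero_cup_one]
  · have hchain (w : MatchingModule p (k + 2)) : cap 0 (chainS 2 x w) = chainS 0 x (cap 0 w) :=
      map_chainS (cap 0) (fun i hi => K.cap_zero_S_of_gt (by omega)) w
    simp (disch := omega) [K₁.T_chainS_succ, hchain, K.cap_cup_of_gt, K.chainS_cup_self]

theorem cap_zero_S_one (v : MatchingModule p (k + 2)) : cap 0 (S 1 v) = cap 1 (T 0 v) := by
  rw [← K.cap_one_T_zero_T_one, K.T_S_of_pos (by omega)]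

theorem cap_zero_T_zero (v : MatchingModule p (k + 2)) : cap 0 (T 0 v) = p.s • cap 0 v := by
  refine ext_arc (cap 0 ∘ₗ T 0) (p.s • cap 0) (fun x hx v => ?_) v
  simp only [LinearMap.comp_apply, LinearMap.smul_apply]
  have K₁ := K.tangleRelations_one
  rcases x with _ | _ | x
  · simp (disch := omega)
  · simp (disch := omega) [cap_zero_cup_one, s_smul_r_smul]
  · simp (disch := omega) [chainS_succ_eq_S, K.cap_zero_S_one, K.T_zero_chainS_two,
      K.T_zero_cup_of_lt, K₁.cap_chainS_succ_left, K₁.chainT_cup_of_gt, K₁.cap_cup_succ,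
      chainT_succ_eq_chainT, s_smul_r_smul]

theorem T_zero_sq_arc_one (v : MatchingModule p (k + 1)) :
    T 0 (T 0 (arc 1 v)) =
      arc 1 v + p.z • T 0 (arc 1 v) - (p.z * p.s) • cup 0 (cap 0 (arc 1 v)) := by
  have hS : S 1 (arc 0 v) = T 0 (cup 1 v) := by
    rw [← cup_zero, ← K.T_one_T_zero_cup_one, K.S_T_of_pos (by omega)]
  simp (disch := omega) only [T_zero_arc_succ, chainS_zero, ← hS, S_arc_self, cap_zero_arc_succ,
    chainT_zero, map_smul, z_mul_s_smul_r_smul, cup_zero]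
  module

theorem T_zero_sq (v : MatchingModule p (k + 2)) :
    T 0 (T 0 v) = v + p.z • T 0 v - (p.z * p.s) • cup 0 (cap 0 v) := by
  refine ext_arc (T 0 ∘ₗ T 0) (LinearMap.id + p.z • T 0 - (p.z * p.s) • cup 0 ∘ₗ cap 0)
    (fun x hx v => ?_) v
  simp only [LinearMap.comp_apply, LinearMap.sub_apply, LinearMap.add_apply, LinearMap.smul_apply,
    LinearMap.id_apply]
  rcases x with _ | x
  · simp only [T_zero_arc_zero, cap_zero_arc_zero, cup_zero, map_smul, smul_smul p.s p.s, s_mul_s]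
    module
  induction x with
  | zero => exact K.T_zero_sq_arc_one v
  | succ x ih =>
    rw [← T_arc_self v (show x + 1 ≤ 2 * (k + 1) by omega), K.T_zero_comm hx, K.T_zero_comm hx,
      ih (by omega), K.cap_zero_T_of_gt (by omega), cup_zero, cup_zero,
      ← T_arc_of_lt _ (Nat.zero_le x) (Nat.zero_le _)]
    simp only [map_sub, map_add, map_smul]

theorem T_zero_S_zero (v : MatchingModule p (k + 2)) : T 0 (S 0 v) = v := by
  rw [S_apply, map_sub, map_smul, map_sub, cup_zero, T_zero_arc_zero, K.T_zero_sq, cup_zero]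
  module

theorem T_zero_braid_arc_zero (v : MatchingModule p (k + 1)) :
    T 0 (T 1 (T 0 (arc 0 v))) = T 1 (T 0 (T 1 (arc 0 v))) := by
  simp (disch := omega) [K.T_cup_of_pos (i := 0)]

theorem T_zero_braid (v : MatchingModule p (k + 2)) :
    T 0 (T 1 (T 0 v)) = T 1 (T 0 (T 1 v)) := by
  refine ext_arc (T 0 ∘ₗ T 1 ∘ₗ T 0) (T 1 ∘ₗ T 0 ∘ₗ T 1) (fun x hx v => ?_) v
  simp only [LinearMap.comp_apply]
  rcases x with _ | _ | x
  · exact K.T_zero_braid_arc_zero v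
  · rw [← T_arc_self v (Nat.zero_le _)]
    refine (braid_apply_of_quadratic (E := cup 1 ∘ₗ cap 1) (F := cup 0 ∘ₗ cap 0)
      (K.T_sq_of_pos (by omega)) K.T_zero_sq (fun w => ?_) (K.T_zero_braid_arc_zero v).symm).symm
    simp only [LinearMap.comp_apply]
    rw [K.T_one_T_zero_cup_one, K.cap_zero_T_one_T_zero]
  · simp (disch := omega) [K.braidRelations_one.T_chainS_succ, K.T_zero_chainS_two,
      K.T_zero_cup_of_lt]

end IndexZero

section Step

variable (K : KauffmanRelations p k)
include K

theorem braidRelations_succ : BraidRelations p 0 (k + 2) where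
  T_S := @fun
    | 0, _, _, v => K.T_zero_S_zero v
    | _ + 1, _, h, v => K.T_S_of_pos (by omega) v
  S_T := @fun
    | 0, _, _, v => S_T_of_T_S K.T_zero_S_zero (fun v => by simp) K.cap_zero_T_zero v
    | _ + 1, _, h, v => K.S_T_of_pos (by omega) v
  T_comm := @fun
    | 0, _ + 2, _, _, h, v => K.T_zero_comm (by omega) v
    | _ + 1, _ + 1, _, hij, h, v => K.T_comm_of_pos (by omega) (by omega) v
  T_braid := @fun
    | 0, _, _, v => K.T_zero_braid v
    | _ + 1, _, h, v => K.T_braid_of_pos (by omega) v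

theorem tangleRelations_succ : TangleRelations p 0 (k + 1) where
  toBraidRelations := K.braidRelations_succ
  lower := K.toBraidRelations
  cap_cup := @fun
    | 0, _, _, v => by simp
    | _ + 1, _, h, v => K.cap_cup_of_pos h v
  cap_cup_succ := @fun
    | 0, _, _, v => cap_zero_cup_one v
    | _ + 1, _, h, v => K.cap_cup_succ_of_pos h v
  cap_succ_cup := @fun
    | 0, _, _, v => cap_one_cup_zero v
    | _ + 1, _, h, v => K.cap_succ_cup_of_pos h v
  T_cup := @fun
    | 0, _, _, v => by simp
    | _ + 1, _, h, v => K.T_cup_of_pos h v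
  cap_T := @fun
    | 0, _, _, v => K.cap_zero_T_zero v
    | _ + 1, _, h, v => K.cap_T_of_pos h v
  T_cup_of_lt := @fun
    | 0, _ + 2, _, _, h, v => K.T_zero_cup_of_lt h v
    | _ + 1, _ + 1, _, hij, h, v => K.T_cup_of_lt_of_pos (by omega) h v
  T_cup_of_gt := @fun
    | _, 0, _, _, _, v => by simp
    | _ + 1, _ + 1, _, hij, h, v => K.T_cup_of_gt_of_pos (by omega) h v
  cap_T_of_lt := @fun
    | 0, _ + 2, _, _, h, v => K.cap_T_zero_of_lt h v
    | _ + 1, _ + 1, _, hij, h, v => K.cap_T_of_lt_of_pos (by omega) h v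
  cap_T_of_gt := @fun
    | _, 0, _, _, h, v => K.cap_zero_T_of_gt h v
    | _ + 1, _ + 1, _, hij, h, v => K.cap_T_of_gt_of_pos (by omega) h v
  T_T_succ_cup := @fun
    | 0, _, _, v => T_zero_T_one_cup_zero v
    | _ + 1, _, h, v => K.T_T_succ_cup_of_pos h v
  T_succ_T_cup := @fun
    | 0, _, _, v => K.T_one_T_zero_cup_one v
    | _ + 1, _, h, v => K.T_succ_T_cup_of_pos h v
  cap_T_T_succ := @fun
    | 0, _, _, v => K.cap_one_T_zero_T_one v
    | _ + 1, _, h, v => K.cap_T_T_succ_of_pos h v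
  cap_T_succ_T := @fun
    | 0, _, _, v => K.cap_zero_T_one_T_zero v
    | _ + 1, _, h, v => K.cap_T_succ_T_of_pos h v

theorem succ : KauffmanRelations p (k + 1) where
  toTangleRelations := K.tangleRelations_succ
  toCupCapRelations := K.toCupCapRelations.succ K.tangleRelations_succ

end Step

end KauffmanRelations

end

section

variable (p : KauffmanParameters R)

theorem T_zero_S_zero_one (v : MatchingModule p 1) : T 0 (S 0 v) = v := by
  refine ext_arc (T 0 ∘ₗ S 0) LinearMap.id (fun x hx v => ?_) v
  obtain rfl : x = 0 := by omega
  simp only [LinearMap.comp_apply, LinearMap.id_apply, S_apply, map_sub, map_smul,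
    T_zero_arc_zero, cap_zero_arc_zero, cup_zero, smul_smul p.s p.s, s_mul_s]
  module

theorem cap_zero_T_zero_one (v : MatchingModule p 1) : cap 0 (T 0 v) = p.s • cap 0 v := by
  refine ext_arc (cap 0 ∘ₗ T 0) (p.s • cap 0) (fun x hx v => ?_) v
  obtain rfl : x = 0 := by omega
  simp

theorem tangleRelations_zero : TangleRelations p 0 0 where
  T_S := @fun | 0, _, _, v => T_zero_S_zero_one p v
  S_T := @fun
    | 0, _, _, v => S_T_of_T_S (T_zero_S_zero_one p) (fun v => by simp) (cap_zero_T_zero_one p) v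
  T_comm _ _ _ := by omega
  T_braid _ _ := by omega
  lower := ⟨by omega, by omega, by omega, by omega⟩
  cap_cup := @fun | 0, _, _, v => by simp
  cap_cup_succ _ _ := by omega
  cap_succ_cup _ _ := by omega
  T_cup := @fun | 0, _, _, v => by simp
  cap_T := @fun | 0, _, _, v => cap_zero_T_zero_one p v
  T_cup_of_lt _ _ _ := by omega
  T_cup_of_gt _ _ _ := by omega
  cap_T_of_lt _ _ _ := by omega
  cap_T_of_gt _ _ _ := by omega
  T_T_succ_cup _ _ := by omega
  T_succ_T_cup _ _ := by omega
  cap_T_T_succ _ _ := by omega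
  cap_T_succ_T _ _ := by omega

theorem kauffmanRelations : ∀ k, KauffmanRelations p k
  | 0 => ⟨tangleRelations_zero p, CupCapRelations.zero (tangleRelations_zero p)⟩
  | k + 1 => (kauffmanRelations k).succ

end

section

variable {p : KauffmanParameters R} {k : ℕ}

/-- The cup diagram of `k` nested arcs, joining `i` and `2 * k - 1 - i`. -/
def nestedCups (p : KauffmanParameters R) : (k : ℕ) → MatchingModule p k
  | 0 => fun _ => 1
  | k + 1 => cup k (nestedCups p k)

/-- Closing `2 * k` points by nested arcs, joining `i` and `2 * k - 1 - i`. -/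
def nestedCaps (p : KauffmanParameters R) : (k : ℕ) → MatchingModule p k →ₗ[R] R
  | 0 => LinearMap.proj ()
  | k + 1 => nestedCaps p k ∘ₗ cap k

theorem nestedCups_succ (p : KauffmanParameters R) (k : ℕ) :
    nestedCups p (k + 1) = cup k (nestedCups p k) := rfl

theorem nestedCaps_succ (v : MatchingModule p (k + 1)) :
    nestedCaps p (k + 1) v = nestedCaps p k (cap k v) := rfl

theorem nestedCaps_zero_nestedCups (p : KauffmanParameters R) :
    nestedCaps p 0 (nestedCups p 0) = 1 := rfl

theorem T_nestedCups (p : KauffmanParameters R) {i j : ℕ} (hij : i + j + 2 = 2 * k)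
    (hi : i + 2 ≤ k) : T i (nestedCups p k) = T j (nestedCups p k) := by
  induction k generalizing j with
  | zero => omega
  | succ k ih =>
    have H := kauffmanRelations p k
    rcases Nat.lt_or_ge (i + 1) k with hik | hik
    · obtain ⟨j, rfl⟩ : ∃ j', j = j' + 2 := ⟨j - 2, by omega⟩
      rw [nestedCups_succ, H.T_cup_of_lt i.zero_le hik (by omega),
        H.T_cup_of_gt k.zero_le (by omega) (by omega), ih (j := j) (by omega) hik]
    · obtain ⟨rfl, rfl⟩ : k = i + 1 ∧ j = i + 2 := by omega
      rw [nestedCups_succ, ← H.S_succ_cup i.zero_le (by omega),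
        ← H.S_cup_succ (i + 1).zero_le (by omega), nestedCups_succ,
        ← (kauffmanRelations p i).cup_cup le_rfl (by omega)]

theorem nestedCaps_T {i j : ℕ} (hij : i + j + 2 = 2 * k) (hi : i + 2 ≤ k)
    (v : MatchingModule p k) : nestedCaps p k (T i v) = nestedCaps p k (T j v) := by
  induction k generalizing j with
  | zero => omega
  | succ k ih =>
    have H := kauffmanRelations p k
    rcases Nat.lt_or_ge (i + 1) k with hik | hik
    · obtain ⟨j, rfl⟩ : ∃ j', j = j' + 2 := ⟨j - 2, by omega⟩
      rw [nestedCaps_succ, nestedCaps_succ, H.cap_T_of_lt i.zero_le hik (by omega),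
        H.cap_T_of_gt k.zero_le (by omega) (by omega), ih (j := j) (by omega) hik]
    · obtain ⟨rfl, rfl⟩ : k = i + 1 ∧ j = i + 2 := by omega
      rw [nestedCaps_succ (T i v), nestedCaps_succ (T (i + 2) v),
        ← H.cap_S_succ i.zero_le (by omega), ← H.cap_succ_S (i + 1).zero_le (by omega),
        nestedCaps_succ, nestedCaps_succ,
        ← (kauffmanRelations p i).cap_cap le_rfl (by omega)]

end

end MatchingModule

section Transposable

variable {A V : Type*} [Ring A] [Algebra R A] [AddCommGroup V] [Module R V]

/-- The elements `y` of an algebra acting on `V` whose action can be moved, both from the vector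
`c` and from the functional `f`, to an operator commuting with the whole action. -/
def transposable (ρ : A →ₐ[R] Module.End R V) (c : V) (f : V →ₗ[R] R) : Subalgebra R A where
  carrier := {y | ∃ B : Module.End R V, (∀ x, Commute B (ρ x)) ∧ ρ y c = B c ∧ f ∘ₗ ρ y = f ∘ₗ B}
  algebraMap_mem' t := ⟨algebraMap R _ t, fun x => Algebra.commute_algebraMap_left t _,
    by rw [AlgHom.commutes], by rw [AlgHom.commutes]⟩
  add_mem' := by
    rintro x y ⟨A, hA, hAc, hAf⟩ ⟨B, hB, hBc, hBf⟩
    refine ⟨A + B, fun w => (hA w).add_left (hB w), ?_, ?_⟩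
    · rw [map_add, LinearMap.add_apply, hAc, hBc, LinearMap.add_apply]
    · rw [map_add, LinearMap.comp_add, hAf, hBf, LinearMap.comp_add]
  mul_mem' := by
    rintro x y ⟨A, hA, hAc, hAf⟩ ⟨B, hB, hBc, hBf⟩
    refine ⟨B * A, fun w => (hB w).mul_left (hA w), ?_, ?_⟩
    · rw [map_mul, Module.End.mul_apply, hBc, ← Module.End.mul_apply, ← (hB x).eq,
        Module.End.mul_apply, hAc, Module.End.mul_apply]
    · rw [map_mul, Module.End.mul_eq_comp, ← LinearMap.comp_assoc, hAf, LinearMap.comp_assoc,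
        ← Module.End.mul_eq_comp, (hA y).eq, Module.End.mul_eq_comp, ← LinearMap.comp_assoc, hBf,
        LinearMap.comp_assoc, Module.End.mul_eq_comp]

variable {ρ : A →ₐ[R] Module.End R V} {c : V} {f : V →ₗ[R] R}

theorem inv_mem_transposable (y : Aˣ) (B : (Module.End R V)ˣ) (hB : ∀ x, Commute ↑B (ρ x))
    (hc : ρ y c = (B : Module.End R V) c) (hf : f ∘ₗ ρ y = f ∘ₗ ↑B) :
    ↑y⁻¹ ∈ transposable ρ c f := by
  have hyy : ρ y * ρ ↑y⁻¹ = 1 := by rw [← map_mul, y.mul_inv, map_one]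
  have hyy' : ρ ↑y⁻¹ * ρ y = 1 := by rw [← map_mul, y.inv_mul, map_one]
  have hB' x := (hB x).units_inv_left
  refine ⟨↑B⁻¹, hB', ?_, ?_⟩
  · calc ρ ↑y⁻¹ c = (ρ ↑y⁻¹ * ↑B⁻¹) ((B : Module.End R V) c) := by
          rw [← Module.End.mul_apply, mul_assoc, B.inv_mul, mul_one]
      _ = (↑B⁻¹ : Module.End R V) c := by
          rw [← (hB' _).eq, ← hc, ← Module.End.mul_apply, mul_assoc, hyy', mul_one]
  · calc f ∘ₗ ρ ↑y⁻¹ = (f ∘ₗ ↑B) ∘ₗ (↑B⁻¹ * ρ ↑y⁻¹) := by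
          rw [LinearMap.comp_assoc, ← Module.End.mul_eq_comp, ← mul_assoc, B.mul_inv, one_mul]
      _ = f ∘ₗ ↑B⁻¹ := by
          rw [← hf, (hB' _).eq, LinearMap.comp_assoc, ← Module.End.mul_eq_comp, ← mul_assoc, hyy,
            one_mul]

theorem apply_mul_comm_of_mem_transposable {y : A} (hy : y ∈ transposable ρ c f) (x : A) :
    f (ρ (x * y) c) = f (ρ (y * x) c) := by
  obtain ⟨B, hB, hBc, hBf⟩ := hy
  calc f (ρ (x * y) c) = f ((ρ x * B) c) := by
        rw [map_mul, Module.End.mul_apply, hBc, Module.End.mul_apply]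
    _ = (f ∘ₗ B) (ρ x c) := by rw [← (hB x).eq]; rfl
    _ = f (ρ (y * x) c) := by rw [← hBf, map_mul]; rfl

end Transposable

end Skein

/-! ### Spans of double cosets -/

section SkeinHook

variable {K A : Type*} [Field K] [Ring A] [Algebra K A] {r z : K} {t u : Aˣ}

/-- The element `e` determined by the Kauffman skein relation `t - t⁻¹ = z • (1 - e)`; it is a cap
followed by a cup when `t` is a crossing. -/
def skeinHook (z : K) (t : Aˣ) : A := 1 - z⁻¹ • (↑t - ↑t⁻¹)

theorem map_skeinHook {A' : Type*} [Ring A'] [Algebra K A'] (φ : A →ₐ[K] A') (z : K) (t : Aˣ) :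
    φ (skeinHook z t) = skeinHook z (Units.map (φ : A →* A') t) := by
  simp only [skeinHook, map_sub, map_one, map_smul, Units.coe_map, Units.coe_map_inv,
    MonoidHom.coe_coe]

theorem skeinHook_semiconjBy {v : A} (h : SemiconjBy v ↑t ↑u) :
    SemiconjBy v (skeinHook z t) (skeinHook z u) := by
  have hsub := h.sub_right h.units_inv_right
  simp only [SemiconjBy, skeinHook, mul_sub, sub_mul, mul_one, one_mul, mul_smul_comm,
    smul_mul_assoc] at hsub ⊢
  rw [hsub]

theorem inv_eq_sub_smul_skeinHook (hz : z ≠ 0) (t : Aˣ) :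
    (↑t⁻¹ : A) = ↑t - z • (1 - skeinHook z t) := by
  rw [skeinHook, sub_sub_cancel, smul_inv_smul₀ hz, sub_sub_cancel]

section Twist

variable (hu : skeinHook z u * ↑u = r⁻¹ • skeinHook z u)
include hu

theorem mul_skeinHook : ↑u * skeinHook z u = r⁻¹ • skeinHook z u :=
  (skeinHook_semiconjBy (Commute.refl (u : A))).eq.trans hu

theorem inv_mul_skeinHook (hr : r ≠ 0) : ↑u⁻¹ * skeinHook z u = r • skeinHook z u := by
  rw [Units.inv_mul_eq_iff_eq_mul, mul_smul_comm, mul_skeinHook hu, smul_inv_smul₀ hr]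

theorem mul_self_eq_skeinHook (hz : z ≠ 0) :
    (↑u * ↑u : A) = 1 + z • ↑u - (z * r⁻¹) • skeinHook z u := by
  have hskein := congrArg (· * (u : A)) (inv_eq_sub_smul_skeinHook hz u)
  simp only [Units.inv_mul, sub_mul, smul_mul_assoc, one_mul, hu] at hskein
  rw [hskein]
  module

theorem skeinHook_mul_self (hr : r ≠ 0) :
    skeinHook z u * skeinHook z u = (1 - z⁻¹ * (r⁻¹ - r)) • skeinHook z u := by
  conv_lhs => rw [skeinHook, sub_mul, one_mul, smul_mul_assoc, sub_mul, ← skeinHook,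
    mul_skeinHook hu, inv_mul_skeinHook hu hr]
  module

end Twist

/-- The relations of the BMW algebras between two neighbouring crossings `t` and `u`. -/
structure AdjacentCrossings (r z : K) (t u : Aˣ) : Prop where
  braid : t * u * t = u * t * u
  hook_mul : skeinHook z u * ↑u = r⁻¹ • skeinHook z u
  hook_mul_hook : skeinHook z u * ↑t * skeinHook z u = r • skeinHook z u
  hook_inv_mul_hook : skeinHook z u * ↑t⁻¹ * skeinHook z u = r⁻¹ • skeinHook z u

namespace AdjacentCrossings

variable (H : AdjacentCrossings r z t u)
include H

theorem braid_val : (↑t * ↑u * ↑t : A) = ↑u * ↑t * ↑u := by exact_mod_cast H.braid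

theorem mul_mul_hook_left : ↑t * ↑u * skeinHook z t = skeinHook z u * (↑t * ↑u) :=
  skeinHook_semiconjBy (H.braid_val.trans (mul_assoc _ _ _))

theorem mul_mul_hook_right : ↑u * ↑t * skeinHook z u = skeinHook z t * (↑u * ↑t) :=
  skeinHook_semiconjBy (H.braid_val.symm.trans (mul_assoc _ _ _))

theorem mul_hook : ↑u * skeinHook z t = ↑t⁻¹ * skeinHook z u * ↑t * ↑u := by
  rw [mul_assoc, mul_assoc, ← H.mul_mul_hook_left, mul_assoc, Units.inv_mul_cancel_left]

theorem mul_hook_mul_hook (hr : r ≠ 0) :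
    ↑u * skeinHook z t * skeinHook z u = ↑t⁻¹ * skeinHook z u := by
  rw [H.mul_hook, mul_assoc _ (u : A), mul_skeinHook H.hook_mul, mul_smul_comm, mul_assoc,
    mul_assoc, ← mul_assoc (skeinHook z u), H.hook_mul_hook, mul_smul_comm, inv_smul_smul₀ hr]

theorem hook_mul_hook_left (hr : r ≠ 0) :
    skeinHook z u * skeinHook z t = skeinHook z u * ↑t⁻¹ * ↑u⁻¹ := by
  rw [Units.eq_mul_inv_iff_mul_eq, Units.eq_mul_inv_iff_mul_eq, mul_assoc, mul_assoc,
    ← H.mul_mul_hook_right, ← mul_assoc, ← mul_assoc, H.hook_mul, smul_mul_assoc, smul_mul_assoc,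
    H.hook_mul_hook, inv_smul_smul₀ hr]

theorem hook_mul_hook_mul (hr : r ≠ 0) :
    skeinHook z u * skeinHook z t * ↑u = skeinHook z u * ↑t⁻¹ := by
  rw [H.hook_mul_hook_left hr, Units.inv_mul_cancel_right]

theorem hook_mul_hook_mul_hook (hr : r ≠ 0) :
    skeinHook z u * skeinHook z t * skeinHook z u = skeinHook z u := by
  rw [H.hook_mul_hook_left hr, mul_assoc _ (↑u⁻¹ : A), inv_mul_skeinHook H.hook_mul hr,
    mul_smul_comm, H.hook_inv_mul_hook, smul_inv_smul₀ hr]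

theorem mul_hook_mul (hr : r ≠ 0) (hz : z ≠ 0) :
    ↑u * skeinHook z t * ↑u =
      ↑t⁻¹ * skeinHook z u * ↑t + z • (↑u * skeinHook z t) - z • (↑t⁻¹ * skeinHook z u) := by
  have h : ↑t⁻¹ * skeinHook z u * ↑t * skeinHook z u = r • (↑t⁻¹ * skeinHook z u) := by
    rw [mul_assoc, mul_assoc, ← mul_assoc (skeinHook z u), H.hook_mul_hook, mul_smul_comm]
  rw [H.mul_hook, mul_assoc _ (u : A), mul_self_eq_skeinHook H.hook_mul hz, mul_sub, mul_add,
    mul_one, mul_smul_comm, mul_smul_comm, h, smul_smul, inv_mul_cancel_right₀ hr]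

end AdjacentCrossings

end SkeinHook

section DoubleCoset

variable {K A : Type*} [Field K] [Ring A] [Algebra K A] {r z : K} {t u : Aˣ}

/-- The span of `1`, a crossing and its hook. -/
def crossingSpan (z : K) (u : Aˣ) : Submodule K A := .span K {1, ↑u, skeinHook z u}

/-- The sub-bimodule over a subalgebra `B` generated by `1`, a crossing and its hook. -/
def doubleCosetSpan (z : K) (B : Subalgebra K A) (u : Aˣ) : Submodule K A :=
  B.toSubmodule * crossingSpan z u * B.toSubmodule

theorem one_mem_crossingSpan (z : K) (u : Aˣ) : 1 ∈ crossingSpan z u :=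
  Submodule.subset_span (by simp)

theorem mem_crossingSpan (z : K) (u : Aˣ) : ↑u ∈ crossingSpan z u :=
  Submodule.subset_span (by simp)

theorem skeinHook_mem_crossingSpan (z : K) (u : Aˣ) : skeinHook z u ∈ crossingSpan z u :=
  Submodule.subset_span (by simp)

theorem inv_mem_crossingSpan (hz : z ≠ 0) (u : Aˣ) : ↑u⁻¹ ∈ crossingSpan z u := by
  rw [inv_eq_sub_smul_skeinHook hz]
  exact sub_mem (mem_crossingSpan z u) (Submodule.smul_mem _ _
    (sub_mem (one_mem_crossingSpan z u) (skeinHook_mem_crossingSpan z u)))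

theorem map_crossingSpan {A' : Type*} [Ring A'] [Algebra K A'] (φ : A →ₐ[K] A') (z : K) (t : Aˣ) :
    (crossingSpan z t).map φ.toLinearMap = crossingSpan z (Units.map (φ : A →* A') t) := by
  rw [crossingSpan, Submodule.map_span]
  simp [Set.image_insert_eq, map_skeinHook, crossingSpan]

theorem crossingSpan_mul_self_le (hr : r ≠ 0) (hz : z ≠ 0)
    (hu : skeinHook z u * ↑u = r⁻¹ • skeinHook z u) :
    crossingSpan z u * crossingSpan z u ≤ crossingSpan z u := by
  have h_one := one_mem_crossingSpan z u
  have h_self := mem_crossingSpan z u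
  have h_hook := skeinHook_mem_crossingSpan z u
  have h_smul (c : K) := Submodule.smul_mem _ c h_hook
  conv_lhs => rw [crossingSpan, Submodule.span_mul_span]
  rw [Submodule.span_le]
  rintro _ ⟨x, rfl | rfl | rfl, y, rfl | rfl | rfl, rfl⟩ <;>
    simp only [one_mul, mul_one, mul_self_eq_skeinHook hu hz, hu, mul_skeinHook hu,
      skeinHook_mul_self hu hr, SetLike.mem_coe, h_one, h_self, h_hook, h_smul]
  exact sub_mem (add_mem h_one (Submodule.smul_mem _ _ h_self)) (h_smul _)

theorem commute_of_mem_crossingSpan {c x : A} (hc : Commute ↑u c) (hx : x ∈ crossingSpan z u) :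
    Commute x c := by
  induction hx using Submodule.span_induction with
  | mem x hx =>
    rcases hx with rfl | rfl | rfl
    exacts [Commute.one_left c, hc, (skeinHook_semiconjBy hc.symm).symm]
  | zero => exact Commute.zero_left c
  | add x y _ _ hx hy => exact hx.add_left hy
  | smul a x _ hx => exact hx.smul_left a

variable {B C : Subalgebra K A}

theorem mul_mul_mem_doubleCosetSpan {a b x : A} (ha : a ∈ B) (hx : x ∈ crossingSpan z u)
    (hb : b ∈ B) : a * x * b ∈ doubleCosetSpan z B u :=
  Submodule.mul_mem_mul (Submodule.mul_mem_mul ha hx) hb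

theorem crossingSpan_le_doubleCosetSpan (z : K) (B : Subalgebra K A) (u : Aˣ) :
    crossingSpan z u ≤ doubleCosetSpan z B u := fun x hx => by
  simpa using mul_mul_mem_doubleCosetSpan B.one_mem hx B.one_mem

theorem le_doubleCosetSpan (z : K) (B : Subalgebra K A) (u : Aˣ) :
    B.toSubmodule ≤ doubleCosetSpan z B u := fun x hx => by
  simpa using mul_mul_mem_doubleCosetSpan hx (one_mem_crossingSpan z u) B.one_mem

theorem mul_doubleCosetSpan_mul (z : K) (B : Subalgebra K A) (u : Aˣ) :
    B.toSubmodule * doubleCosetSpan z B u * B.toSubmodule = doubleCosetSpan z B u := by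
  simp only [doubleCosetSpan, mul_assoc, B.isIdempotentElem_toSubmodule.eq]
  simp only [← mul_assoc, B.isIdempotentElem_toSubmodule.eq]

theorem doubleCosetSpan_le {N : Submodule K A}
    (h : ∀ a ∈ B, ∀ b ∈ B, a * b ∈ N ∧ a * ↑u * b ∈ N ∧ a * skeinHook z u * b ∈ N) :
    doubleCosetSpan z B u ≤ N := by
  rw [doubleCosetSpan, crossingSpan, ← Submodule.span_eq B.toSubmodule, Submodule.span_mul_span,
    Submodule.span_mul_span, Submodule.span_le]
  rintro _ ⟨_, ⟨a, ha, x, rfl | rfl | rfl, rfl⟩, b, hb, rfl⟩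
  · simpa only [SetLike.mem_coe, mul_one] using (h a ha b hb).1
  · exact (h a ha b hb).2.1
  · exact (h a ha b hb).2.2

theorem map_doubleCosetSpan {A' : Type*} [Ring A'] [Algebra K A'] (φ : A →ₐ[K] A') (z : K)
    (C : Subalgebra K A) (t : Aˣ) :
    (doubleCosetSpan z C t).map φ.toLinearMap =
      doubleCosetSpan z (C.map φ) (Units.map (φ : A →* A') t) := by
  rw [doubleCosetSpan, Submodule.map_mul, Submodule.map_mul, map_crossingSpan,
    doubleCosetSpan, Subalgebra.map_toSubmodule]

theorem doubleCosetSpan_eq_top (hz : z ≠ 0)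
    (h : crossingSpan z u * B.toSubmodule * crossingSpan z u ≤ doubleCosetSpan z B u)
    (hgen : ∀ S : Subalgebra K A, B ≤ S → ↑u ∈ S → ↑u⁻¹ ∈ S → S = ⊤) :
    doubleCosetSpan z B u = ⊤ := by
  have h_mul : doubleCosetSpan z B u * doubleCosetSpan z B u ≤ doubleCosetSpan z B u := calc
    _ = B.toSubmodule * (crossingSpan z u * B.toSubmodule * crossingSpan z u) * B.toSubmodule := by
      simp only [doubleCosetSpan, mul_assoc]
      simp only [← mul_assoc B.toSubmodule B.toSubmodule, B.isIdempotentElem_toSubmodule.eq]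
    _ ≤ B.toSubmodule * doubleCosetSpan z B u * B.toSubmodule := by gcongr
    _ = doubleCosetSpan z B u := mul_doubleCosetSpan_mul z B u
  have h_cross := crossingSpan_le_doubleCosetSpan z B u
  let W : Subalgebra K A := (doubleCosetSpan z B u).toSubalgebra
    (h_cross (one_mem_crossingSpan z u)) fun x y hx hy => h_mul (Submodule.mul_mem_mul hx hy)
  have hW : W = ⊤ := hgen W (le_doubleCosetSpan z B u) (h_cross (mem_crossingSpan z u))
    (h_cross (inv_mem_crossingSpan hz u))
  exact (congrArg Subalgebra.toSubmodule hW).trans Algebra.top_toSubmodule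

theorem mul_mem_doubleCosetSpan_left {b x : A} (hb : b ∈ B) (hx : x ∈ crossingSpan z u) :
    b * x ∈ doubleCosetSpan z B u := by
  simpa using mul_mul_mem_doubleCosetSpan hb hx B.one_mem

theorem mul_mem_doubleCosetSpan_right {x b : A} (hx : x ∈ crossingSpan z u) (hb : b ∈ B) :
    x * b ∈ doubleCosetSpan z B u := by
  simpa using mul_mul_mem_doubleCosetSpan B.one_mem hx hb

theorem mul_mul_mem_doubleCosetSpan_of_hook {b x y : A} (hb : b ∈ B)
    (hx : x ∈ ({1, ↑u, skeinHook z u} : Set A)) (hy : y ∈ ({1, ↑u, skeinHook z u} : Set A))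
    (h : ∀ x ∈ ({↑u, skeinHook z u} : Set A), ∀ y ∈ ({↑u, skeinHook z u} : Set A),
      x * b * y ∈ doubleCosetSpan z B u) : x * b * y ∈ doubleCosetSpan z B u := by
  rcases hx with rfl | hx
  · rw [one_mul]
    exact mul_mem_doubleCosetSpan_left hb (Submodule.subset_span hy)
  rcases hy with rfl | hy
  · rw [mul_one]
    exact mul_mem_doubleCosetSpan_right (Submodule.subset_span (.inr hx)) hb
  · exact h x hx y hy

namespace AdjacentCrossings

variable (H : AdjacentCrossings r z t u) (hr : r ≠ 0) (ht : ↑t ∈ B) (ht' : ↑t⁻¹ ∈ B)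
include H

include ht ht' in
theorem mul_crossing_mul_mem {x y : A} (hx : x ∈ ({1, ↑u, skeinHook z u} : Set A))
    (hy : y ∈ ({1, ↑u, skeinHook z u} : Set A)) : x * ↑t * y ∈ doubleCosetSpan z B u := by
  have he : skeinHook z t ∈ B := sub_mem B.one_mem (B.smul_mem (sub_mem ht ht') _)
  have hu := mem_crossingSpan z u
  refine mul_mul_mem_doubleCosetSpan_of_hook ht hx hy ?_
  rintro _ (rfl | rfl) _ (rfl | rfl)
  · rw [← H.braid_val]
    exact mul_mul_mem_doubleCosetSpan ht hu ht
  · rw [H.mul_mul_hook_right, ← mul_assoc]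
    exact mul_mul_mem_doubleCosetSpan he hu ht
  · rw [mul_assoc, ← H.mul_mul_hook_left]
    exact mul_mul_mem_doubleCosetSpan ht hu he
  · rw [H.hook_mul_hook]
    exact crossingSpan_le_doubleCosetSpan z B u
      (Submodule.smul_mem _ _ (skeinHook_mem_crossingSpan z u))

include hr ht ht' in
theorem mul_hook_mul_mem (hz : z ≠ 0) {x y : A} (hx : x ∈ ({1, ↑u, skeinHook z u} : Set A))
    (hy : y ∈ ({1, ↑u, skeinHook z u} : Set A)) :
    x * skeinHook z t * y ∈ doubleCosetSpan z B u := by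
  have he : skeinHook z t ∈ B := sub_mem B.one_mem (B.smul_mem (sub_mem ht ht') _)
  have hf := skeinHook_mem_crossingSpan z u
  refine mul_mul_mem_doubleCosetSpan_of_hook he hx hy ?_
  rintro _ (rfl | rfl) _ (rfl | rfl)
  · rw [H.mul_hook_mul hr hz]
    refine sub_mem (add_mem (mul_mul_mem_doubleCosetSpan ht' hf ht) (Submodule.smul_mem _ _ ?_))
      (Submodule.smul_mem _ _ (mul_mem_doubleCosetSpan_left ht' hf))
    exact mul_mem_doubleCosetSpan_right (mem_crossingSpan z u) he
  · rw [H.mul_hook_mul_hook hr]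
    exact mul_mem_doubleCosetSpan_left ht' hf
  · rw [H.hook_mul_hook_mul hr]
    exact mul_mem_doubleCosetSpan_right hf ht'
  · rw [H.hook_mul_hook_mul_hook hr]
    exact crossingSpan_le_doubleCosetSpan z B u hf

include hr ht ht' in
theorem crossingSpan_mul_mul_le (hz : z ≠ 0) :
    crossingSpan z u * crossingSpan z t * crossingSpan z u ≤ doubleCosetSpan z B u := by
  conv_lhs => rw [crossingSpan, crossingSpan, Submodule.span_mul_span, Submodule.span_mul_span]
  rw [Submodule.span_le]
  rintro _ ⟨_, ⟨x, hx, y, rfl | rfl | rfl, rfl⟩, w, hw, rfl⟩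
  · exact mul_mul_mem_doubleCosetSpan_of_hook B.one_mem hx hw fun x hx y hy => by
      rw [mul_one]
      exact crossingSpan_le_doubleCosetSpan z B u (crossingSpan_mul_self_le hr hz H.hook_mul
        (Submodule.mul_mem_mul (Submodule.subset_span (.inr hx)) (Submodule.subset_span (.inr hy))))
  · exact H.mul_crossing_mul_mem ht ht' hx hw
  · exact H.mul_hook_mul_mem hr ht ht' hz hx hw

end AdjacentCrossings

theorem AdjacentCrossings.crossingSpan_mul_subalgebra_mul_le (H : AdjacentCrossings r z t u)
    (hr : r ≠ 0) (hz : z ≠ 0) (hC : ∀ c ∈ C, Commute (u : A) c)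
    (hB : B.toSubmodule = doubleCosetSpan z C t) :
    crossingSpan z u * B.toSubmodule * crossingSpan z u ≤ doubleCosetSpan z B u := by
  have ht : crossingSpan z t ≤ B.toSubmodule := hB ▸ crossingSpan_le_doubleCosetSpan z C t
  have hCB : C.toSubmodule ≤ B.toSubmodule := hB ▸ le_doubleCosetSpan z C t
  have hcomm : crossingSpan z u * C.toSubmodule = C.toSubmodule * crossingSpan z u :=
    Submodule.mul_comm_of_commute fun x hx c hc => commute_of_mem_crossingSpan (hC c hc) hx
  calc crossingSpan z u * B.toSubmodule * crossingSpan z u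
      = C.toSubmodule * (crossingSpan z u * crossingSpan z t * crossingSpan z u) *
          C.toSubmodule := by
        rw [hB, doubleCosetSpan, ← mul_assoc, ← mul_assoc, hcomm]
        simp only [mul_assoc, hcomm]
    _ ≤ B.toSubmodule * doubleCosetSpan z B u * B.toSubmodule := by
        gcongr
        exact H.crossingSpan_mul_mul_le hr (ht (mem_crossingSpan z t))
          (ht (inv_mem_crossingSpan hz t)) hz
    _ = doubleCosetSpan z B u := mul_doubleCosetSpan_mul z B u

end DoubleCoset

/-! ### The BMW algebras -/

namespace BMW

section Generators

theorem T_mul_S (r q : ℂ) (n : ℕ) (i : Fin (n - 1)) : T r q n i * S r q n i = 1 := by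
  rw [T, S, ← map_mul, RingQuot.mkAlgHom_rel ℂ (BMWRel.inv_right i), map_one]

theorem S_mul_T (r q : ℂ) (n : ℕ) (i : Fin (n - 1)) : S r q n i * T r q n i = 1 := by
  rw [T, S, ← map_mul, RingQuot.mkAlgHom_rel ℂ (BMWRel.inv_left i), map_one]

/-- The generator `T_i` as a unit. -/
noncomputable def unitT (r q : ℂ) (n : ℕ) (i : Fin (n - 1)) : (BMW r q n)ˣ :=
  ⟨T r q n i, S r q n i, T_mul_S r q n i, S_mul_T r q n i⟩

theorem E_eq_skeinHook (r q : ℂ) (n : ℕ) (i : Fin (n - 1)) :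
    E r q n i = skeinHook (q - q⁻¹) (unitT r q n i) := by
  rw [E, bmwE, map_sub, map_one, map_smul, map_sub]
  rfl

variable {r q : ℂ} {n : ℕ}

theorem T_comm {i j : Fin (n - 1)} (h : (i : ℕ) + 2 ≤ j) :
    T r q n i * T r q n j = T r q n j * T r q n i := by
  rw [T, T, ← map_mul, RingQuot.mkAlgHom_rel ℂ (BMWRel.comm i j h), map_mul]

theorem E_mul_T (i : Fin (n - 1)) : E r q n i * T r q n i = r⁻¹ • E r q n i := by
  rw [T, E, ← map_mul, RingQuot.mkAlgHom_rel ℂ (BMWRel.eT i), map_smul]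

theorem adjacentCrossings {i j : Fin (n - 1)} (h : (i : ℕ) + 1 = j) :
    AdjacentCrossings r (q - q⁻¹) (unitT r q n i) (unitT r q n j) where
  braid := Units.ext <| by
    have hbraid := RingQuot.mkAlgHom_rel ℂ (BMWRel.braid (r := r) (q := q) i j h)
    simp only [map_mul] at hbraid
    exact hbraid
  hook_mul := by
    rw [← E_eq_skeinHook]
    exact E_mul_T j
  hook_mul_hook := by
    have heTe := RingQuot.mkAlgHom_rel ℂ (BMWRel.eTe (r := r) (q := q) i j h)
    rw [map_mul, map_mul, map_smul] at heTe
    rw [← E_eq_skeinHook]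
    exact heTe
  hook_inv_mul_hook := by
    have heSe := RingQuot.mkAlgHom_rel ℂ (BMWRel.eSe (r := r) (q := q) i j h)
    rw [map_mul, map_mul, map_smul] at heSe
    rw [← E_eq_skeinHook]
    exact heSe

theorem adjoin_range_T_union_range_S (r q : ℂ) (n : ℕ) :
    Algebra.adjoin ℂ (Set.range (T r q n) ∪ Set.range (S r q n)) = ⊤ := by
  have h : RingQuot.mkAlgHom ℂ (BMWRel r q n) '' Set.range (FreeAlgebra.ι ℂ) =
      Set.range (T r q n) ∪ Set.range (S r q n) := by
    rw [← Set.range_comp, ← Set.Sum.elim_range]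
    exact congrArg Set.range (funext fun g => by cases g <;> rfl)
  rw [← h, ← AlgHom.map_adjoin, FreeAlgebra.adjoin_range_ι, Algebra.map_top,
    AlgHom.range_eq_top]
  exact RingQuot.mkAlgHom_surjective ℂ _

theorem subalgebra_eq_top {B : Subalgebra ℂ (BMW r q n)} (hT : ∀ i, T r q n i ∈ B)
    (hS : ∀ i, S r q n i ∈ B) : B = ⊤ := by
  rw [← top_le_iff, ← adjoin_range_T_union_range_S, Algebra.adjoin_le_iff, Set.union_subset_iff]
  exact ⟨Set.range_subset_iff.2 hT, Set.range_subset_iff.2 hS⟩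

theorem bot_eq_top (r q : ℂ) : (⊥ : Subalgebra ℂ (BMW r q 1)) = ⊤ :=
  subalgebra_eq_top (fun i => i.elim0) fun i => i.elim0

theorem map_apply_of_forall_T {V W : Type*} [AddCommGroup V] [Module ℂ V] [AddCommGroup W]
    [Module ℂ W] {ρ : BMW r q n →ₐ[ℂ] Module.End ℂ V} {σ : BMW r q n →ₐ[ℂ] Module.End ℂ W}
    {f : V →ₗ[ℂ] W} (h : ∀ i v, f (ρ (T r q n i) v) = σ (T r q n i) (f v)) (x : BMW r q n) (v : V) :
    f (ρ x v) = σ x (f v) := by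
  induction (adjoin_range_T_union_range_S r q n ▸ Algebra.mem_top :
    x ∈ Algebra.adjoin ℂ (Set.range (T r q n) ∪ Set.range (S r q n)))
    using Algebra.adjoin_induction generalizing v with
  | mem x hx =>
    rcases hx with ⟨i, rfl⟩ | ⟨i, rfl⟩
    · exact h i v
    · calc f (ρ (S r q n i) v) = σ (S r q n i * T r q n i) (f (ρ (S r q n i) v)) := by
            rw [S_mul_T, map_one, Module.End.one_apply]
        _ = σ (S r q n i) (f (ρ (T r q n i * S r q n i) v)) := by
            rw [map_mul, map_mul, Module.End.mul_apply, Module.End.mul_apply, h]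
        _ = σ (S r q n i) (f v) := by rw [T_mul_S, map_one, Module.End.one_apply]
  | algebraMap c => simp only [AlgHom.commutes, Module.algebraMap_end_apply, map_smul]
  | add x y _ _ hx hy => simp only [map_add, LinearMap.add_apply, hx, hy]
  | mul x y _ _ hx hy => simp only [map_mul, Module.End.mul_apply, hx, hy]

theorem commute_map_of_forall_T {A : Type*} [Ring A] [Algebra ℂ A] {φ : BMW r q n →ₐ[ℂ] A} {b : A}
    (h : ∀ i, Commute b (φ (T r q n i))) (x : BMW r q n) : Commute b (φ x) := by
  have := map_apply_of_forall_T (ρ := (Algebra.lmul ℂ A).comp φ) (σ := (Algebra.lmul ℂ A).comp φ)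
    (f := LinearMap.mulLeft ℂ b)
    (fun i v => (h i).left_comm v) x 1
  simpa [Commute, SemiconjBy] using this

end Generators

section Representation

open MatchingModule

variable {r q : ℂ} (hr : r ≠ 0) (hz : q - q⁻¹ ≠ 0) {k : ℕ}

/-- The parameters of the Kauffman skein theory in which the BMW algebras `D_n(r,q)` act. -/
noncomputable def kauffmanParameters : KauffmanParameters ℂ where
  r := r
  s := r⁻¹
  z := q - q⁻¹
  d := (r - r⁻¹) / (q - q⁻¹) + 1
  r_mul_s := mul_inv_cancel₀ hr
  z_mul_d := by rw [mul_add, mul_div_cancel₀ _ hz, mul_one]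

/-- The generators `T_i` and `S_i` acting as crossings on matchings of `2 * (k + 1)` points. -/
noncomputable def freeRep (k : ℕ) : FreeAlgebra ℂ (BMWGenerators (k + 1)) →ₐ[ℂ]
    Module.End ℂ (MatchingModule (kauffmanParameters hr hz) (k + 1)) :=
  FreeAlgebra.lift ℂ (Sum.elim (fun i => MatchingModule.T i) fun i => MatchingModule.S i)

@[simp]
theorem freeRep_bmwT (i : Fin (k + 1 - 1)) :
    freeRep hr hz k (bmwT (k + 1) i) = MatchingModule.T (i : ℕ) := by
  simp [freeRep, bmwT]

@[simp]
theorem freeRep_bmwS (i : Fin (k + 1 - 1)) :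
    freeRep hr hz k (bmwS (k + 1) i) = MatchingModule.S (i : ℕ) := by
  simp [freeRep, bmwS]

@[simp]
theorem freeRep_bmwE (i : Fin (k + 1 - 1)) :
    freeRep hr hz k (bmwE q (k + 1) i) = cup i ∘ₗ cap i := by
  ext1 v
  rw [bmwE, map_sub, map_one, map_smul, map_sub, freeRep_bmwT, freeRep_bmwS]
  simp only [LinearMap.sub_apply, LinearMap.smul_apply, Module.End.one_apply, S_apply,
    sub_sub_cancel, LinearMap.comp_apply]
  exact (congrArg (v - ·) (inv_smul_smul₀ hz _)).trans (sub_sub_cancel v _)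

theorem freeRep_eq_of_rel {x y : FreeAlgebra ℂ (BMWGenerators (k + 1))}
    (h : BMWRel r q (k + 1) x y) : freeRep hr hz k x = freeRep hr hz k y := by
  have H := kauffmanRelations (kauffmanParameters hr hz) k
  ext1 v
  cases h <;> simp only [map_mul, map_one, map_smul, freeRep_bmwT, freeRep_bmwS, freeRep_bmwE,
    Module.End.mul_apply, Module.End.one_apply, LinearMap.smul_apply, LinearMap.comp_apply]
  case inv_right i => exact H.T_S (Nat.zero_le _) (by omega) v
  case inv_left i => exact H.S_T (Nat.zero_le _) (by omega) v
  case braid i j hij => exact hij ▸ H.T_braid (Nat.zero_le _) (by omega) v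
  case comm i j hij => exact H.T_comm (Nat.zero_le _) hij (by omega) v
  case eT i => rw [H.cap_T (Nat.zero_le _) (by omega), map_smul]; rfl
  case eTe i j hij =>
    rw [← hij, H.cap_succ_T_cup_succ (Nat.zero_le _) (by omega), map_smul]; rfl
  case eSe i j hij =>
    rw [← hij, H.cap_succ_S_cup_succ (Nat.zero_le _) (by omega), map_smul]; rfl

/-- The representation of `D_{k+1}(r,q)` on matchings of `2 * (k + 1)` points, by tangles on the
first `k + 1` of them. -/
noncomputable def rep (k : ℕ) : BMW r q (k + 1) →ₐ[ℂ]
    Module.End ℂ (MatchingModule (kauffmanParameters hr hz) (k + 1)) :=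
  RingQuot.liftAlgHom ℂ ⟨freeRep hr hz k, fun _ _ => freeRep_eq_of_rel hr hz⟩

@[simp]
theorem rep_T (i : Fin (k + 1 - 1)) : rep hr hz k (T r q (k + 1) i) = MatchingModule.T (i : ℕ) := by
  rw [rep, T, RingQuot.liftAlgHom_mkAlgHom_apply, freeRep_bmwT]

@[simp]
theorem rep_E (i : Fin (k + 1 - 1)) : rep hr hz k (E r q (k + 1) i) = cup i ∘ₗ cap i := by
  rw [rep, E, RingQuot.liftAlgHom_mkAlgHom_apply, freeRep_bmwE]

theorem transposable_rep_eq_top (k : ℕ) :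
    transposable (rep hr hz k) (nestedCups _ (k + 1)) (nestedCaps _ (k + 1)) = ⊤ := by
  have H := kauffmanRelations (kauffmanParameters hr hz) k
  suffices h : ∀ i, (unitT r q (k + 1) i).val ∈ transposable (rep hr hz k) _ _ ∧
      (unitT r q (k + 1) i)⁻¹.val ∈ transposable (rep hr hz k) _ _ from
    subalgebra_eq_top (fun i => (h i).1) fun i => (h i).2
  intro i
  obtain ⟨j, hj⟩ : ∃ j, (i : ℕ) + j + 2 = 2 * (k + 1) := ⟨2 * k - i, by omega⟩
  have hi : (i : ℕ) + 2 ≤ k + 1 := by omega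
  let B : (Module.End ℂ (MatchingModule (kauffmanParameters hr hz) (k + 1)))ˣ :=
    ⟨MatchingModule.T j, MatchingModule.S j, LinearMap.ext (H.T_S j.zero_le (by omega)),
      LinearMap.ext (H.S_T j.zero_le (by omega))⟩
  have hB : ∀ x, Commute ↑B (rep hr hz k x) := by
    refine commute_map_of_forall_T fun l => LinearMap.ext fun v => ?_
    rw [rep_T]
    exact (H.T_comm (Nat.zero_le _) (by omega) (by omega) v).symm
  have hrep : rep hr hz k (unitT r q (k + 1) i) = MatchingModule.T (i : ℕ) := rep_T hr hz i
  have hcups : rep hr hz k (unitT r q (k + 1) i) (nestedCups _ (k + 1)) =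
      B.val (nestedCups _ (k + 1)) := by
    rw [hrep]
    exact T_nestedCups _ hj hi
  have hcaps : nestedCaps _ (k + 1) ∘ₗ rep hr hz k (unitT r q (k + 1) i) =
      nestedCaps _ (k + 1) ∘ₗ B.val := by
    rw [hrep]
    exact LinearMap.ext (nestedCaps_T hj hi)
  exact ⟨⟨B, hB, hcups, hcaps⟩, inv_mem_transposable _ B hB hcups hcaps⟩

/-- The Markov trace on `D_{k+1}(r,q)`: the closure of a tangle, normalised by `d ^ (k + 1)`. -/
noncomputable def markovTrace (k : ℕ) : BMW r q (k + 1) →ₗ[ℂ] ℂ :=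
  ((kauffmanParameters hr hz).d ^ (k + 1))⁻¹ •
    (nestedCaps _ (k + 1) ∘ₗ LinearMap.applyₗ (nestedCups _ (k + 1)) ∘ₗ (rep hr hz k).toLinearMap)

theorem markovTrace_apply (x : BMW r q (k + 1)) :
    markovTrace hr hz k x = ((kauffmanParameters hr hz).d ^ (k + 1))⁻¹ *
      nestedCaps _ (k + 1) (rep hr hz k x (nestedCups _ (k + 1))) := rfl

theorem markovTrace_mul_comm (x y : BMW r q (k + 1)) :
    markovTrace hr hz k (x * y) = markovTrace hr hz k (y * x) := by
  rw [markovTrace_apply, markovTrace_apply, apply_mul_comm_of_mem_transposable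
    (transposable_rep_eq_top hr hz k ▸ Algebra.mem_top)]

section Inclusion

variable {ι : BMW r q (k + 1) →ₐ[ℂ] BMW r q (k + 2)}
  (hι : ∀ i, ι (T r q (k + 1) i) = T r q (k + 2) (Fin.castLE k.le_succ i))
include hι

theorem rep_map_cup (x : BMW r q (k + 1)) (v : MatchingModule (kauffmanParameters hr hz) (k + 1)) :
    rep hr hz (k + 1) (ι x) (cup (k + 1) v) = cup (k + 1) (rep hr hz k x v) := by
  refine (map_apply_of_forall_T (σ := (rep hr hz (k + 1)).comp ι) (fun i v => ?_) x v).symm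
  rw [AlgHom.comp_apply, hι, rep_T, rep_T]
  exact ((kauffmanRelations _ (k + 1)).T_cup_of_lt (Nat.zero_le _) (by grind) (by omega) v).symm

theorem cap_rep_map (x : BMW r q (k + 1)) (v : MatchingModule (kauffmanParameters hr hz) (k + 2)) :
    cap (k + 1) (rep hr hz (k + 1) (ι x) v) = rep hr hz k x (cap (k + 1) v) := by
  refine map_apply_of_forall_T (ρ := (rep hr hz (k + 1)).comp ι) (fun i v => ?_) x v
  rw [AlgHom.comp_apply, hι, rep_T, rep_T]
  exact (kauffmanRelations _ (k + 1)).cap_T_of_lt (Nat.zero_le _) (by grind) (by omega) v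

theorem markovTrace_map_mul_mul_map (hd : (kauffmanParameters hr hz).d ≠ 0) {y : BMW r q (k + 2)}
    {c : ℂ} (hy : ∀ v, cap (k + 1) (rep hr hz (k + 1) y (cup (k + 1) v)) = c • v)
    (a b : BMW r q (k + 1)) :
    markovTrace hr hz (k + 1) (ι a * y * ι b) =
      c / (kauffmanParameters hr hz).d * markovTrace hr hz k (a * b) := by
  rw [markovTrace_apply, markovTrace_apply, nestedCaps_succ, nestedCups_succ, map_mul, map_mul,
    map_mul, Module.End.mul_apply, Module.End.mul_apply, Module.End.mul_apply,
    rep_map_cup hr hz hι, cap_rep_map hr hz hι, hy, map_smul, map_smul, smul_eq_mul,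
    pow_succ _ (k + 1)]
  field_simp

end Inclusion

theorem isMarkovTrace_markovTrace (hd : (r - r⁻¹) / (q - q⁻¹) + 1 ≠ 0)
    {ι : ∀ k : ℕ, BMW r q (k + 1) →ₐ[ℂ] BMW r q (k + 2)}
    (hι : ∀ k i, ι k (T r q (k + 1) i) = T r q (k + 2) (Fin.castLE k.le_succ i)) :
    IsMarkovTrace r q ι (markovTrace hr hz) := by
  have H k := kauffmanRelations (kauffmanParameters hr hz) (k + 1)
  refine ⟨?_, fun k a b => ⟨?_, ?_, ?_⟩⟩
  · rw [markovTrace_apply, map_one, Module.End.one_apply, nestedCaps_succ, nestedCups_succ,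
      (kauffmanRelations _ 0).cap_cup le_rfl le_rfl, map_smul, nestedCaps_zero_nestedCups,
      smul_eq_mul, mul_one, zero_add, pow_one]
    exact inv_mul_cancel₀ hd
  · have h := markovTrace_map_mul_mul_map hr hz (hι k) hd (y := 1)
      (fun v => by rw [map_one]; exact (H k).cap_cup (Nat.zero_le _) (by omega) v) a b
    rwa [mul_one, div_self (a := (kauffmanParameters hr hz).d) hd, one_mul] at h
  · refine markovTrace_map_mul_mul_map hr hz (hι k) hd (fun v => ?_) a b
    rw [rep_T]
    exact (H k).cap_succ_T_cup_succ k.zero_le (by omega) v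
  · refine markovTrace_map_mul_mul_map hr hz (hι k) hd (fun v => ?_) a b
    rw [rep_E, LinearMap.comp_apply, (H k).cap_cup_succ k.zero_le (by omega),
      (H k).cap_succ_cup k.zero_le (by omega), one_smul]

end Representation

section Uniqueness

variable {r q : ℂ} {ι : ∀ k : ℕ, BMW r q (k + 1) →ₐ[ℂ] BMW r q (k + 2)}
  (hι : ∀ k i, ι k (T r q (k + 1) i) = T r q (k + 2) (Fin.castLE k.le_succ i))
include hι

theorem map_unitT (k : ℕ) (i : Fin (k + 1 - 1)) :
    Units.map (ι k : BMW r q (k + 1) →* BMW r q (k + 2)) (unitT r q (k + 1) i) =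
      unitT r q (k + 2) (Fin.castLE k.le_succ i) :=
  Units.ext (hι k i)

theorem subalgebra_eq_top_of_range_le (k : ℕ) {B : Subalgebra ℂ (BMW r q (k + 2))}
    (hB : (ι k).range ≤ B) (hT : T r q (k + 2) ⟨k, by omega⟩ ∈ B)
    (hS : S r q (k + 2) ⟨k, by omega⟩ ∈ B) : B = ⊤ := by
  have hunit (i : Fin (k + 2 - 1)) (hi : (i : ℕ) < k) :
      T r q (k + 2) i ∈ B ∧ S r q (k + 2) i ∈ B := by
    have h := map_unitT hι k ⟨i, hi⟩
    exact ⟨hB ⟨_, congrArg Units.val h⟩, hB ⟨_, congrArg Units.inv h⟩⟩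
  refine subalgebra_eq_top (fun i => ?_) fun i => ?_ <;>
    rcases Nat.lt_or_ge i k with hi | hi
  · exact (hunit i hi).1
  · rwa [show i = ⟨k, by omega⟩ from Fin.ext (by grind)]
  · exact (hunit i hi).2
  · rwa [show i = ⟨k, by omega⟩ from Fin.ext (by grind)]

theorem commute_T_map_map (k : ℕ) (x : BMW r q (k + 1)) :
    Commute (T r q (k + 3) ⟨k + 1, by omega⟩) (ι (k + 1) (ι k x)) := by
  refine commute_map_of_forall_T (φ := (ι (k + 1)).comp (ι k)) (fun i => ?_) x
  rw [AlgHom.comp_apply, hι, hι]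
  exact (T_comm (Nat.succ_le_succ i.2)).symm

theorem doubleCosetSpan_range_eq_top (hr : r ≠ 0) (hz : q - q⁻¹ ≠ 0) (k : ℕ) :
    doubleCosetSpan (q - q⁻¹) (ι k).range (unitT r q (k + 2) ⟨k, by omega⟩) = ⊤ := by
  induction k with
  | zero =>
    refine doubleCosetSpan_eq_top hz ?_ fun _ => subalgebra_eq_top_of_range_le hι 0
    have hrange : (ι 0).range = ⊥ := by
      rw [← Algebra.map_top, ← bot_eq_top, Algebra.map_bot]
    have hE := E_mul_T (r := r) (q := q) (n := 2) ⟨0, by omega⟩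
    rw [E_eq_skeinHook] at hE
    rw [hrange, Algebra.toSubmodule_bot, mul_one]
    exact (crossingSpan_mul_self_le hr hz hE).trans (crossingSpan_le_doubleCosetSpan ..)
  | succ k ih =>
    refine doubleCosetSpan_eq_top hz ?_ fun _ => subalgebra_eq_top_of_range_le hι (k + 1)
    refine (adjacentCrossings (i := ⟨k, by omega⟩) rfl).crossingSpan_mul_subalgebra_mul_le hr hz
      (C := (ι k).range.map (ι (k + 1))) ?_ ?_
    · rintro _ ⟨_, ⟨x, rfl⟩, rfl⟩
      exact commute_T_map_map hι k x
    · calc (ι (k + 1)).range.toSubmodule = Submodule.map (ι (k + 1)).toLinearMap ⊤ := by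
            rw [← Algebra.map_top, Subalgebra.map_toSubmodule, Algebra.top_toSubmodule]
        _ = _ := by rw [← ih, map_doubleCosetSpan, map_unitT hι]; rfl

theorem eq_of_isMarkovTrace (hr : r ≠ 0) (hz : q - q⁻¹ ≠ 0)
    {tr tr' : ∀ k : ℕ, BMW r q (k + 1) →ₗ[ℂ] ℂ} (h : IsMarkovTrace r q ι tr)
    (h' : IsMarkovTrace r q ι tr') : tr = tr' := by
  funext k
  induction k with
  | zero =>
    ext x
    obtain ⟨c, rfl⟩ := Algebra.mem_bot.1 (bot_eq_top r q ▸ Algebra.mem_top (x := x))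
    rw [Algebra.algebraMap_eq_smul_one, map_smul, map_smul, h.1, h'.1]
  | succ k ih =>
    have hle : doubleCosetSpan (q - q⁻¹) (ι k).range (unitT r q (k + 2) ⟨k, by omega⟩) ≤
        LinearMap.eqLocus (tr (k + 1)) (tr' (k + 1)) := by
      refine doubleCosetSpan_le ?_
      rintro _ ⟨a, rfl⟩ _ ⟨b, rfl⟩
      rw [← E_eq_skeinHook]
      obtain ⟨h_one, hT, hE⟩ := h.2 k a b
      obtain ⟨h_one', hT', hE'⟩ := h'.2 k a b
      rw [ih] at h_one hT hE
      exact ⟨h_one.trans h_one'.symm, hT.trans hT'.symm, hE.trans hE'.symm⟩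
    exact LinearMap.eqLocus_eq_top.1
      (top_le_iff.1 (doubleCosetSpan_range_eq_top hι hr hz k ▸ hle))

end Uniqueness

end BMW

/-- For nonzero `r, q` with `q² ≠ 1` and
`d = (r − r⁻¹)/(q − q⁻¹) + 1 ≠ 0`, there is a unique sequence of ℂ-linear functionals
`tr_n : D_n(r,q) → ℂ` satisfying `tr_1(1) = 1` and the Markov conditions, and moreover
each `tr_n` is a trace functional: `tr_n(xy) = tr_n(yx)`. -/
theorem stmt_16 (r q : ℂ) (hr : r ≠ 0) (hq : q ≠ 0) (hq2 : q ^ 2 ≠ 1)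
    (hd : (r - r⁻¹) / (q - q⁻¹) + 1 ≠ 0)
    (ι : ∀ k : ℕ, BMW r q (k + 1) →ₐ[ℂ] BMW r q (k + 2))
    (hιT : ∀ (k : ℕ) (i : Fin ((k + 1) - 1)),
      ι k (BMW.T r q (k + 1) i) = BMW.T r q (k + 2) (Fin.castLE (by omega) i))
    (hιS : ∀ (k : ℕ) (i : Fin ((k + 1) - 1)),
      ι k (BMW.S r q (k + 1) i) = BMW.S r q (k + 2) (Fin.castLE (by omega) i)) :
    ∃ tr : ∀ k : ℕ, BMW r q (k + 1) →ₗ[ℂ] ℂ,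
      IsMarkovTrace r q ι tr ∧
      (∀ (k : ℕ) (x y : BMW r q (k + 1)), tr k (x * y) = tr k (y * x)) ∧
      ∀ tr' : ∀ k : ℕ, BMW r q (k + 1) →ₗ[ℂ] ℂ, IsMarkovTrace r q ι tr' → tr' = tr := by
  have hz : q - q⁻¹ ≠ 0 := fun h => hq2 <| by
    rw [pow_two, mul_eq_one_iff_eq_inv₀ hq]
    exact sub_eq_zero.1 h
  have htr := BMW.isMarkovTrace_markovTrace hr hz hd hιT
  exact ⟨BMW.markovTrace hr hz, htr, fun k => BMW.markovTrace_mul_comm hr hz,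
    fun _ htr' => BMW.eq_of_isMarkovTrace hιT hr hz htr' htr⟩
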